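/- arXiv:2001.01951 — 3 statements merged into one kernel-verified Lean document; each statement's English description precedes it below -/
import Mathlib

section
/- Let h_1, ..., h_s be vectors in ℝ^d that generate a dense additive subgroup of ℝ^d, and let f : ℝ^d → ℂ be a continuous function. Suppose that for each i ∈ {1,...,s} there is a natural number n_i ≥ 1 such that the complex linear span of the functions f, τ_{h_i}f, (τ_{h_i})²f, ..., (τ_{h_i})^{n_i}f has dimension at most n_i. Then f is an exponential polynomial. -/
/-- `f : ℝ^d → ℂ` is an exponential polynomial: a finite sum of terms
`P_k(x) * exp(⟨λ_k, x⟩)` with `P_k` complex polynomials and `λ_k ∈ ℂ^d`. -/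
def IsExpPoly {d : ℕ} (f : (Fin d → ℝ) → ℂ) : Prop :=
  ∃ (m : ℕ) (P : Fin m → MvPolynomial (Fin d) ℂ) (lam : Fin m → Fin d → ℂ),
    ∀ x : Fin d → ℝ,
      f x = ∑ k, MvPolynomial.eval (fun i => (x i : ℂ)) (P k) *
        Complex.exp (∑ i, lam k i * x i)

open MeasureTheory intervalIntegral Topology

namespace IsExpPoly

variable {d : ℕ}

theorem zero : IsExpPoly (fun _ : Fin d → ℝ => (0 : ℂ)) :=
  ⟨0, fun _ => 0, fun _ => 0, by simp⟩

theorem const (c : ℂ) : IsExpPoly (fun _ : Fin d → ℝ => c) :=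
  ⟨1, fun _ => MvPolynomial.C c, fun _ => 0, by simp⟩

theorem add {f g : (Fin d → ℝ) → ℂ} (hf : IsExpPoly f) (hg : IsExpPoly g) :
    IsExpPoly (fun x => f x + g x) := by
  obtain ⟨m, P, lam, hf⟩ := hf
  obtain ⟨m', P', lam', hg⟩ := hg
  refine ⟨m + m', Fin.append P P', Fin.append lam lam', fun x => ?_⟩
  simp only [hf x, hg x, Fin.sum_univ_add, Fin.append_left, Fin.append_right]

theorem sum {ι : Type*} (s : Finset ι) {f : ι → (Fin d → ℝ) → ℂ}
    (hf : ∀ k ∈ s, IsExpPoly (f k)) : IsExpPoly (fun x => ∑ k ∈ s, f k x) := by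
  classical
  induction s using Finset.induction_on with
  | empty => simpa using zero
  | insert a s ha ih =>
    simp only [Finset.sum_insert ha]
    exact (hf a (by simp)).add (ih fun k hk => hf k (by simp [hk]))

theorem monomial_mul {f : (Fin d → ℝ) → ℂ} (hf : IsExpPoly f) (i : Fin d) (a : ℕ) (c : ℂ) :
    IsExpPoly (fun x => ((x i : ℂ) ^ a * Complex.exp (c * x i)) * f x) := by
  obtain ⟨m, P, lam, hf⟩ := hf
  refine ⟨m, fun k => MvPolynomial.X i ^ a * P k, fun k => lam k + Pi.single i c, fun x => ?_⟩
  simp only [hf x, Finset.mul_sum]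
  refine Finset.sum_congr rfl fun k _ => ?_
  have : ∑ j, (lam k + Pi.single i c : Fin d → ℂ) j * (x j : ℂ) = (∑ j, lam k j * x j) + c * x i := by
    simp [add_mul, Finset.sum_add_distrib, Pi.single_apply]
  rw [this, Complex.exp_add]
  simp only [map_mul, map_pow, MvPolynomial.eval_X]
  ring

end IsExpPoly

/-- A continuous one-parameter group in a Banach algebra is differentiable. -/
theorem exists_hasDerivAt_of_continuous_of_map_add {R : Type*} [NormedRing R] [NormedAlgebra ℝ R]
    [CompleteSpace R] {T : ℝ → R} (hT : Continuous T) (h0 : T 0 = 1)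
    (hadd : ∀ s t, T (s + t) = T s * T t) :
    ∃ A : R, ∀ t, HasDerivAt T (T t * A) t := by
  set Φ : ℝ → R := fun t => ∫ s in (0 : ℝ)..t, T s with hΦ
  have hΦd : ∀ t, HasDerivAt Φ (T t) t := fun t =>
    integral_hasDerivAt_right (hT.intervalIntegrable _ _)
      (hT.stronglyMeasurableAtFilter _ _) hT.continuousAt
  have hunit : ∃ ε : ℝ, IsUnit (Φ ε) := by
    have h1 := (hΦd 0).tendsto_slope
    rw [h0] at h1
    have h2 : ∀ᶠ t in 𝓝[≠] (0 : ℝ), IsUnit (slope Φ 0 t) :=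
      h1.eventually (Units.isOpen.mem_nhds (show IsUnit (1 : R) from isUnit_one))
    obtain ⟨ε, hε, hne⟩ := (h2.and self_mem_nhdsWithin).exists
    refine ⟨ε, ?_⟩
    have hne : ε ≠ 0 := hne
    have : Φ ε = (Units.mk0 ε hne) • slope Φ 0 ε := by
      have hΦ0 : Φ 0 = 0 := by simp [hΦ]
      simp [slope_def_module, hΦ0, Units.smul_def, smul_smul, hne]
    rw [this]
    exact hε.smul _
  obtain ⟨ε, B, hB⟩ := hunit
  have hTB : ∀ t, T t * B = Φ (t + ε) - Φ t := by
    intro t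
    have e1 : T t * B = ∫ s in (0 : ℝ)..ε, T (t + s) := by
      rw [hB]
      simp only [hadd]
      exact (((ContinuousLinearMap.mul ℝ R) (T t)).intervalIntegral_comp_comm
        (hT.intervalIntegrable _ _)).symm
    rw [e1, integral_comp_add_left (fun s => T s), add_zero,
      integral_interval_sub_left (hT.intervalIntegrable _ _) (hT.intervalIntegrable _ _)]
  have hTeq : T = fun t => (Φ (t + ε) - Φ t) * (↑B⁻¹ : R) := by
    funext t
    rw [← hTB, mul_assoc, Units.mul_inv, mul_one]
  refine ⟨(T ε - 1) * (↑B⁻¹ : R), fun t => ?_⟩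
  have hd : HasDerivAt (fun t => (Φ (t + ε) - Φ t) * (↑B⁻¹ : R))
      ((T (t + ε) - T t) * (↑B⁻¹ : R)) t :=
    (((hΦd (t + ε)).comp_add_const t ε).sub (hΦd t)).mul_const _
  rw [← hTeq] at hd
  convert hd using 1
  rw [hadd, ← mul_assoc, mul_sub, mul_one]

section OneParameter

variable {E : Type*} [NormedAddCommGroup E] [NormedSpace ℂ E]

theorem exists_eq_sum_pow_of_pow_apply_eq_zero {T : ℝ → E →L[ℂ] E} {A : E →L[ℂ] E}
    (h0 : T 0 = 1) (hT : ∀ t, HasDerivAt T (T t * A) t) (c : ℂ) (N : ℕ) :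
    ∀ v : E, (((A : E →ₗ[ℂ] E) - c • (1 : Module.End ℂ E)) ^ N) v = 0 →
      ∃ u : ℕ → E, ∀ t : ℝ, Complex.exp (-c * t) • T t v =
        ∑ k ∈ Finset.range N, (t : ℂ) ^ k • u k := by
  induction N with
  | zero =>
    intro v hv
    have : v = 0 := by simpa using hv
    exact ⟨0, by simp [this]⟩
  | succ N ih =>
    intro v hv
    rw [pow_succ, Module.End.mul_apply] at hv
    obtain ⟨u, hu⟩ := ih _ hv
    have hexp : ∀ t : ℝ, HasDerivAt (fun t : ℝ => Complex.exp (-c * t))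
        (Complex.exp (-c * t) * (-c)) t := by
      intro t
      have := ((hasDerivAt_id (t : ℂ)).const_mul (-c)).cexp.comp_ofReal
      simpa using this
    have hTv : ∀ t, HasDerivAt (fun t => T t v) (T t (A v)) t := fun t => by
      have := ((ContinuousLinearMap.apply ℂ E v).restrictScalars ℝ).hasFDerivAt.comp_hasDerivAt t
        (hT t)
      simpa [Function.comp_def] using this
    have hq : ∀ t : ℝ, HasDerivAt (fun t : ℝ => Complex.exp (-c * t) • T t v)
        (∑ k ∈ Finset.range N, (t : ℂ) ^ k • u k) t := by
      intro t
      refine ((hexp t).smul (hTv t)).congr_deriv ?_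
      rw [← hu t]
      simp [mul_smul, sub_eq_add_neg]
    have hs : ∀ t : ℝ, HasDerivAt
        (fun t : ℝ => ∑ k ∈ Finset.range N, (t : ℂ) ^ (k + 1) • ((k + 1 : ℂ)⁻¹ • u k))
        (∑ k ∈ Finset.range N, (t : ℂ) ^ k • u k) t := by
      intro t
      refine HasDerivAt.fun_sum fun k _ => ?_
      have h1 : HasDerivAt (fun t : ℝ => (t : ℂ) ^ (k + 1)) ((k + 1 : ℂ) * (t : ℂ) ^ k) t := by
        simpa using (hasDerivAt_pow (k + 1) (t : ℂ)).comp_ofReal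
      have hk : (k + 1 : ℂ) ≠ 0 := by exact_mod_cast k.succ_ne_zero
      convert h1.smul_const ((k + 1 : ℂ)⁻¹ • u k) using 1
      rw [smul_smul, mul_comm, ← mul_assoc, inv_mul_cancel₀ hk, one_mul]
    have hd := fun t => (hq t).sub (hs t)
    simp only [sub_self] at hd
    have hc := is_const_of_deriv_eq_zero (fun t => (hd t).differentiableAt)
      (fun t => (hd t).deriv)
    refine ⟨fun k => Nat.casesOn k v fun j => (j + 1 : ℂ)⁻¹ • u j, fun t => ?_⟩
    have := hc t 0
    simp only [Pi.sub_apply, h0] at this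
    rw [Finset.sum_range_succ']
    simp at this ⊢
    rw [sub_eq_iff_eq_add] at this
    rw [this, add_comm]

theorem exists_eq_sum_pow_mul_exp [FiniteDimensional ℂ E] {T : ℝ → E →L[ℂ] E}
    (hc : Continuous T) (h0 : T 0 = 1) (hadd : ∀ s t, T (s + t) = T s * T t) (v : E) :
    ∃ (m : ℕ) (a : Fin m → ℕ) (c : Fin m → ℂ) (u : Fin m → E), ∀ t : ℝ,
      T t v = ∑ k, ((t : ℂ) ^ a k * Complex.exp (c k * t)) • u k := by
  have : CompleteSpace E := FiniteDimensional.complete ℂ E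
  obtain ⟨A, hA⟩ := exists_hasDerivAt_of_continuous_of_map_add hc h0 hadd
  have hv : v ∈ ⨆ μ, Module.End.maxGenEigenspace (A : E →ₗ[ℂ] E) μ := by
    rw [Module.End.iSup_maxGenEigenspace_eq_top]; trivial
  induction hv using Submodule.iSup_induction' with
  | mem μ v hv =>
    rw [Module.End.mem_maxGenEigenspace] at hv
    obtain ⟨N, hN⟩ := hv
    obtain ⟨u, hu⟩ := exists_eq_sum_pow_of_pow_apply_eq_zero h0 hA μ N v hN
    refine ⟨N, fun k => k, fun _ => μ, fun k => u k, fun t => ?_⟩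
    have h1 := congrArg (fun w => Complex.exp (μ * t) • w) (hu t)
    simp only [smul_smul, ← Complex.exp_add, Finset.smul_sum] at h1
    rw [show μ * t + -μ * t = 0 by ring, Complex.exp_zero, one_smul] at h1
    rw [h1, Finset.sum_range]
    simp only [mul_comm]
  | zero => exact ⟨0, Fin.elim0, Fin.elim0, Fin.elim0, by simp⟩
  | add v w _ _ hv hw =>
    obtain ⟨m, a, c, u, hv⟩ := hv
    obtain ⟨m', a', c', u', hw⟩ := hw
    refine ⟨m + m', Fin.append a a', Fin.append c c', Fin.append u u', fun t => ?_⟩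
    simp only [map_add, hv t, hw t, Fin.sum_univ_add, Fin.append_left, Fin.append_right]

theorem isExpPoly_of_continuous_representation [FiniteDimensional ℂ E] {d : ℕ}
    {M : (Fin d → ℝ) → E →L[ℂ] E}
    (hc : Continuous M) (h0 : M 0 = 1) (hadd : ∀ x y, M (x + y) = M x * M y)
    (l : E →ₗ[ℂ] ℂ) (v : E) : IsExpPoly (fun x => l (M x v)) := by
  classical
  have key : ∀ (S : Finset (Fin d)) (v : E),
      IsExpPoly (fun x => l (M (∑ i ∈ S, Pi.single i (x i)) v)) := by
    intro S
    induction S using Finset.induction_on with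
    | empty => intro v; simpa using IsExpPoly.const _
    | insert i S hi ih =>
      intro v
      obtain ⟨m, a, c, u, hu⟩ := exists_eq_sum_pow_mul_exp
        (T := fun t : ℝ => M (Pi.single i t)) (hc.comp (continuous_single (A := fun _ : Fin d => ℝ) i))
        (by simpa using h0) (fun s t => by rw [Pi.single_add, hadd]) v
      have : (fun x : Fin d → ℝ => l (M (∑ j ∈ insert i S, Pi.single j (x j)) v)) =
          fun x => ∑ k, ((x i : ℂ) ^ a k * Complex.exp (c k * x i)) *
            l (M (∑ j ∈ S, Pi.single j (x j)) (u k)) := by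
        funext x
        rw [Finset.sum_insert hi, add_comm, hadd, mul_apply_eq_comp, hu (x i)]
        simp
      rw [this]
      exact IsExpPoly.sum _ fun k _ => (ih (u k)).monomial_mul i (a k) (c k)
  simpa [Finset.univ_sum_single] using key Finset.univ v

end OneParameter

theorem isExpPoly_of_mem_finiteDimensional {d : ℕ} {G : AddSubgroup (Fin d → ℝ)}
    (hG : Dense (G : Set (Fin d → ℝ))) (V : Submodule ℂ ((Fin d → ℝ) → ℂ))
    [FiniteDimensional ℂ V] (hcont : ∀ v ∈ V, Continuous v)
    (hinv : ∀ g ∈ G, ∀ v ∈ V, (fun x => v (x + g)) ∈ V)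
    {f : (Fin d → ℝ) → ℂ} (hf : f ∈ V) : IsExpPoly f := by
  set n := Module.finrank ℂ V
  let b : Module.Basis (Fin n) ℂ V := Module.finBasis ℂ V
  let F : (Fin d → ℝ) → (Fin n → ℂ) := fun x i => (b i : (Fin d → ℝ) → ℂ) x
  have hF : Continuous F := continuous_pi fun i => hcont _ (b i).2
  have hspan : Submodule.span ℂ (Set.range F) = ⊤ := by
    by_contra hne
    obtain ⟨l, hl, hle⟩ := Submodule.exists_le_ker_of_lt_top _ (lt_top_iff_ne_top.2 hne)
    apply hl
    have h1 : ∑ i, l (Pi.single i 1) • b i = 0 := by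
      ext x
      have h2 : l (F x) = 0 := hle (Submodule.subset_span ⟨x, rfl⟩)
      rw [LinearMap.pi_apply_eq_sum_univ l (F x)] at h2
      simp only [Submodule.coe_sum, Submodule.coe_smul, Finset.sum_apply, Pi.smul_apply,
        smul_eq_mul, Submodule.coe_zero, Pi.zero_apply]
      rw [← h2]
      refine Finset.sum_congr rfl fun i _ => ?_
      rw [smul_eq_mul, mul_comm]
      congr 2
      ext j
      simp [Pi.single_apply, eq_comm]
    have h3 := Fintype.linearIndependent_iff.1 b.linearIndependent _ h1
    refine LinearMap.pi_ext' fun i => LinearMap.ext_ring ?_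
    simpa using h3 i
  obtain ⟨κ, a, -, hb, hli⟩ := exists_linearIndependent' ℂ F
  rw [hspan] at hb
  let B : Module.Basis κ ℂ (Fin n → ℂ) := Module.Basis.mk hli hb.ge
  have hBa : ∀ k, B k = F (a k) := fun k => by simp [B]
  have : Fintype κ := FiniteDimensional.fintypeBasisIndex B
  have hext : ∀ L L' : (Fin n → ℂ) →L[ℂ] (Fin n → ℂ), (∀ x, L (F x) = L' (F x)) → L = L' := by
    intro L L' h
    apply ContinuousLinearMap.coe_injective
    exact B.ext fun k => by simpa [hBa] using h (a k)
  let M : (Fin d → ℝ) → (Fin n → ℂ) →L[ℂ] (Fin n → ℂ) := fun y =>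
    ∑ k, (LinearMap.toContinuousLinearMap (B.coord k)).smulRight (F (a k + y))
  have hMc : Continuous M := by
    refine continuous_finsetSum _ fun k _ => ?_
    exact ((ContinuousLinearMap.smulRightL ℂ (Fin n → ℂ) (Fin n → ℂ)
      (LinearMap.toContinuousLinearMap (B.coord k))).continuous).comp
        (hF.comp (continuous_const.add continuous_id))
  have hMG : ∀ g ∈ G, ∀ x, M g (F x) = F (x + g) := by
    intro g hg
    have hrep : ∀ i x, F (x + g) i = ∑ j, b.repr ⟨_, hinv g hg _ (b i).2⟩ j * F x j := by
      intro i x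
      have := congrFun (congrArg Subtype.val (b.sum_repr ⟨_, hinv g hg _ (b i).2⟩)) x
      simp only [Submodule.coe_sum, Submodule.coe_smul, Finset.sum_apply, Pi.smul_apply,
        smul_eq_mul] at this
      exact this.symm
    let L : (Fin n → ℂ) →ₗ[ℂ] (Fin n → ℂ) :=
      Matrix.mulVecLin (Matrix.of fun i j => b.repr ⟨_, hinv g hg _ (b i).2⟩ j)
    have hL : ∀ x, L (F x) = F (x + g) := by
      intro x
      ext i
      rw [hrep]
      simp [L, Matrix.mulVec, dotProduct]
    intro x
    rw [← hL x]
    conv_rhs => rw [← B.sum_repr (F x)]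
    simp [M, map_sum, hBa, hL]
  have hM : ∀ y x, M y (F x) = F (x + y) := by
    intro y x
    have h1 : Continuous fun y => M y (F x) := hMc.clm_apply continuous_const
    have h2 : Continuous fun y => F (x + y) := hF.comp (continuous_const.add continuous_id)
    exact congrFun (h1.ext_on hG h2 fun g hg => hMG g hg x) y
  have hM0 : M 0 = 1 := hext _ _ fun x => by simp [hM]
  have hMadd : ∀ x y, M (x + y) = M x * M y := fun x y => hext _ _ fun z => by
    rw [mul_apply_eq_comp, hM, hM, hM, add_comm x y, add_assoc]
  have := isExpPoly_of_continuous_representation hMc hM0 hMadd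
    (∑ i, b.repr ⟨f, hf⟩ i • LinearMap.proj i) (F 0)
  convert this using 1
  funext x
  rw [hM, zero_add]
  have h := congrFun (congrArg Subtype.val (b.sum_repr ⟨f, hf⟩)) x
  simp only [Submodule.coe_sum, Submodule.coe_smul, Finset.sum_apply, Pi.smul_apply,
    smul_eq_mul] at h
  simp [← h, F]

theorem exists_add_nsmul_eq_sum_of_finrank_span_le {X : Type*} [AddCommGroup X] {f : X → ℂ} {h : X}
    {n : ℕ} (hspan : Module.finrank ℂ (Submodule.span ℂ (Set.range fun k : Fin (n + 1) =>
        fun x : X => f (x + (k : ℕ) • h))) ≤ n) :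
    ∃ (N : ℕ) (a : ℕ → ℂ), ∀ x, f (x + N • h) = ∑ j ∈ Finset.range N, a j * f (x + j • h) := by
  classical
  have hdep : ¬ LinearIndependent ℂ (fun k : Fin (n + 1) => fun x : X => f (x + (k : ℕ) • h)) := by
    intro hli
    have := finrank_span_eq_card hli
    rw [Fintype.card_fin] at this
    omega
  rw [Fintype.not_linearIndependent_iff] at hdep
  obtain ⟨g, hg, i, hi⟩ := hdep
  obtain ⟨N, hN, hmax⟩ := (Finset.univ.filter fun i => g i ≠ 0).exists_max_image id
    ⟨i, by simpa using hi⟩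
  simp only [Finset.mem_filter, Finset.mem_univ, true_and, id] at hN hmax
  let c : ℕ → ℂ := fun k => if hk : k < n + 1 then g ⟨k, hk⟩ else 0
  have hc : ∀ k, (N : ℕ) < k → c k = 0 := by
    intro k hk
    by_contra hne
    simp only [c] at hne
    split_ifs at hne with hkn
    · exact absurd (Fin.le_def.1 (hmax _ hne)) (by simpa using hk)
    · exact hne rfl
  have hcN : c N ≠ 0 := by simpa only [c, N.2, dif_pos] using hN
  refine ⟨N, fun j => -(c N)⁻¹ * c j, fun x => ?_⟩
  have h1 : ∑ k ∈ Finset.range (n + 1), c k * f (x + k • h) = 0 := by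
    rw [Finset.sum_range]
    have := congrFun hg x
    simp only [Finset.sum_apply, Pi.smul_apply, smul_eq_mul, Pi.zero_apply] at this
    simpa only [c, Fin.is_lt, dif_pos] using this
  have h2 : ∑ k ∈ Finset.range (N + 1), c k * f (x + k • h) = 0 := by
    rw [← h1]
    refine Finset.sum_subset (Finset.range_subset_range.2 N.2) fun k _ hk => ?_
    rw [hc k (by simpa using hk), zero_mul]
  rw [Finset.sum_range_succ] at h2
  simp only [mul_assoc, ← Finset.mul_sum]
  rw [eq_neg_of_add_eq_zero_left h2]
  field_simp

/-- The translates of `f` by the group generated by the `h i` lie in a finite-dimensional space. -/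
theorem exists_finiteDimensional_invariant {X ι : Type*} [AddCommGroup X] [Fintype ι]
    {f : X → ℂ} (hf0 : f ≠ 0) (h : ι → X) (N : ι → ℕ) (a : ι → ℕ → ℂ)
    (hrec : ∀ i x, f (x + N i • h i) = ∑ j ∈ Finset.range (N i), a i j * f (x + j • h i)) :
    ∃ V ≤ Submodule.span ℂ (Set.range fun g : X => fun x => f (x + g)),
      FiniteDimensional ℂ V ∧ f ∈ V ∧
      ∀ g ∈ AddSubgroup.closure (Set.range h), ∀ v ∈ V, (fun x => v (x + g)) ∈ V := by
  classical
  have hN : ∀ i, 0 < N i := by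
    intro i
    by_contra hi
    apply hf0
    funext x
    have h0 : N i = 0 := by omega
    simpa [h0] using hrec i x
  let w : (ι → ℕ) → X → ℂ := fun k x => f (x + ∑ i, k i • h i)
  let V := Submodule.span ℂ (Set.range fun k : (i : ι) → Fin (N i) => w fun i => k i)
  have hw : ∀ k : ι → ℕ, (∀ i, k i < N i) → w k ∈ V := fun k hk =>
    Submodule.subset_span ⟨fun i => ⟨k i, hk i⟩, rfl⟩
  let τ : X → (X → ℂ) →ₗ[ℂ] (X → ℂ) := fun g => LinearMap.funLeft ℂ ℂ (· + g)
  have hfin : FiniteDimensional ℂ V := FiniteDimensional.span_of_finite ℂ (Set.finite_range _)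
  have hsum : ∀ (k : ι → ℕ) (i : ι) (m : ℕ),
      ∑ j, Function.update k i m j • h j = ∑ j, Function.update k i 0 j • h j + m • h i := by
    intro k i m
    rw [← Finset.add_sum_erase _ _ (Finset.mem_univ i),
      ← Finset.add_sum_erase (a := i) _ (fun j => Function.update k i 0 j • h j)
        (Finset.mem_univ i)]
    simp only [Function.update_self, zero_smul, zero_add]
    rw [add_comm]
    congr 1
    refine Finset.sum_congr rfl fun j hj => ?_
    rw [Function.update_of_ne (Finset.ne_of_mem_erase hj),
      Function.update_of_ne (Finset.ne_of_mem_erase hj)]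
  have hgen : ∀ i, V ≤ V.comap (τ (h i)) := by
    intro i
    refine Submodule.span_le.2 ?_
    rintro _ ⟨k, rfl⟩
    set k' : ι → ℕ := fun i => k i with hk'
    have hlt : ∀ i, k' i < N i := fun i => (k i).2
    have hstep : τ (h i) (w k') = w (Function.update k' i (k' i + 1)) := by
      funext x
      have e := hsum k' i (k' i)
      rw [Function.update_eq_self] at e
      simp only [τ, LinearMap.funLeft_apply, w]
      rw [hsum, e, add_smul, one_smul]
      congr 1
      abel
    have hupd : ∀ m < N i, w (Function.update k' i m) ∈ V := fun m hm => hw _ fun j => by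
      by_cases hj : j = i
      · subst hj; simpa using hm
      · simpa [hj] using hlt j
    change τ (h i) (w k') ∈ V
    rw [hstep]
    rcases (Nat.succ_le_of_lt (hlt i)).lt_or_eq with hm | hm
    · exact hupd _ hm
    · have hm' : k' i + 1 = N i := hm
      have : w (Function.update k' i (k' i + 1)) =
          ∑ j ∈ Finset.range (N i), a i j • w (Function.update k' i j) := by
        funext x
        rw [hm']
        simp only [w, Finset.sum_apply, Pi.smul_apply, smul_eq_mul]
        rw [hsum, ← add_assoc, hrec]
        refine Finset.sum_congr rfl fun j _ => ?_
        rw [hsum k' i j, ← add_assoc]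
      rw [this]
      exact V.sum_mem fun j hj => V.smul_mem _ (hupd j (Finset.mem_range.1 hj))
  refine ⟨V, ?_, hfin, ?_, fun g hg => ?_⟩
  · refine Submodule.span_mono ?_
    rintro _ ⟨k, rfl⟩
    exact ⟨_, rfl⟩
  · have := hw 0 hN
    simpa [w] using this
  · change V ≤ V.comap (τ g)
    have hτ : ∀ g g' v, τ g (τ g' v) = τ (g + g') v := by
      intro g g' v
      funext x
      simp [τ, LinearMap.funLeft_apply, add_assoc]
    have hτ0 : ∀ v, τ 0 v = v := fun v => by funext x; simp [τ, LinearMap.funLeft_apply]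
    induction hg using AddSubgroup.closure_induction with
    | mem g hg => obtain ⟨i, rfl⟩ := hg; exact hgen i
    | zero => exact fun v hv => by simpa [hτ0] using hv
    | add g g' _ _ h1 h2 =>
      intro v hv
      rw [Submodule.mem_comap, ← hτ]
      exact h1 (h2 hv)
    | neg g _ hg =>
      have hinj : Function.Injective (τ g) :=
        Function.LeftInverse.injective (g := τ (-g)) fun v => by rw [hτ, neg_add_cancel, hτ0]
      have hmap : V.map (τ g) = V := by
        refine Submodule.eq_of_le_of_finrank_eq (Submodule.map_le_iff_le_comap.2 hg) ?_
        exact (Submodule.equivMapOfInjective (τ g) hinj V).finrank_eq.symm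
      intro v hv
      rw [← hmap] at hv
      obtain ⟨u, hu, rfl⟩ := hv
      rw [Submodule.mem_comap, hτ, neg_add_cancel, hτ0]
      exact hu

theorem popoviciu_montel_type
    {d s : ℕ} (h : Fin s → (Fin d → ℝ))
    (hdense : Dense ((AddSubgroup.closure (Set.range h) : AddSubgroup (Fin d → ℝ)) : Set (Fin d → ℝ)))
    (f : (Fin d → ℝ) → ℂ) (hf : Continuous f)
    (n : Fin s → ℕ) (hn : ∀ i, 1 ≤ n i)
    (hspan : ∀ i, Module.finrank ℂ
      (Submodule.span ℂ (Set.range fun k : Fin (n i + 1) =>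
        fun x : Fin d → ℝ => f (x + (k : ℕ) • h i))) ≤ n i) :
    IsExpPoly f := by
  by_cases hf0 : f = 0
  · subst hf0
    exact IsExpPoly.zero
  choose N a hrec using fun i => exists_add_nsmul_eq_sum_of_finrank_span_le (hspan i)
  obtain ⟨V, hV, hfin, hfV, hinv⟩ := exists_finiteDimensional_invariant hf0 h N a hrec
  refine isExpPoly_of_mem_finiteDimensional hdense V (fun v hv => ?_) hinv hfV
  have hv' := hV hv
  clear hv
  induction hv' using Submodule.span_induction with
  | mem v hv =>
    obtain ⟨g, rfl⟩ := hv
    exact hf.comp (continuous_id.add continuous_const)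
  | zero => exact continuous_const
  | add u v _ _ hu hv => exact hu.add hv
  | smul c v _ hv => exact hv.const_smul c
end

section
/- (Radó's theorem in higher dimensions.) Let U ⊆ ℝ^d be a nonempty open set, let a_0, a_1, ..., a_n : U → ℝ be continuous functions such that the map a = (a_0, ..., a_n) does not vanish identically on U, and let f : ℝ^d → ℝ be a continuous function satisfying a_0(h)f(x) + a_1(h)f(x + h) + ... + a_n(h)f(x + nh) = 0 for all x ∈ ℝ^d and all h ∈ U. Then f is an exponential polynomial. -/
/-- A continuous real-valued function on `ℝ^d` is an exponential polynomial if it is a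
finite sum of terms `P_k(x) * exp(⟨λ_k, x⟩)` with `P_k` complex polynomials and
`λ_k ∈ ℂ^d` (the sum being real-valued). -/
def IsExpPolyReal {d : ℕ} (f : (Fin d → ℝ) → ℝ) : Prop :=
  ∃ (m : ℕ) (P : Fin m → MvPolynomial (Fin d) ℂ) (lam : Fin m → Fin d → ℂ),
    ∀ x : Fin d → ℝ,
      (f x : ℂ) = ∑ k, MvPolynomial.eval (fun i => (x i : ℂ)) (P k) *
        Complex.exp (∑ i, lam k i * x i)

/-- If pairwise commuting endomorphisms `T h` are each annihilated by a nonzero polynomial on the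
vector `v`, then finitely many of them leave invariant a common finite-dimensional subspace
containing `v`. -/
theorem exists_finiteDimensional_invariant_s3 {K X ι : Type*} [Field K] [AddCommGroup X] [Module K X]
    (T : ι → Module.End K X) (hT : ∀ i j, Commute (T i) (T j)) (p : ι → Polynomial K) (v : X)
    (s : Set ι) (hs : s.Finite) (hp : ∀ i ∈ s, p i ≠ 0)
    (hv : ∀ i ∈ s, Polynomial.aeval (T i) (p i) v = 0) :
    ∃ V : Submodule K X, FiniteDimensional K V ∧ v ∈ V ∧ ∀ i ∈ s, V ≤ V.comap (T i) := by
  suffices H : ∀ r : Set ι, r.Finite → r ⊆ s → ∃ V : Submodule K X, FiniteDimensional K V ∧ v ∈ V ∧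
      (∀ i ∈ r, V ≤ V.comap (T i)) ∧ ∀ i ∈ s, ∀ g ∈ V, Polynomial.aeval (T i) (p i) g = 0 by
    obtain ⟨V, h1, h2, h3, -⟩ := H s hs subset_rfl
    exact ⟨V, h1, h2, h3⟩
  intro r hr
  induction r, hr using Set.Finite.induction_on with
  | empty =>
    intro _
    refine ⟨Submodule.span K {v}, inferInstance, Submodule.mem_span_singleton_self v, by simp, ?_⟩
    intro i hi g hg
    obtain ⟨c, rfl⟩ := Submodule.mem_span_singleton.1 hg
    simp [hv i hi]
  | @insert i r _ _ ih =>
    intro hrs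
    obtain ⟨V, hV, hvV, hinv, hker⟩ := ih ((Set.subset_insert i r).trans hrs)
    have his : i ∈ s := hrs (Set.mem_insert i r)
    set N := (p i).natDegree + 1 with hN
    set V' : Submodule K X := ⨆ k : Fin N, V.map (T i ^ (k : ℕ)) with hV'
    have hlow : ∀ q : Polynomial K, ∀ g ∈ V, q.natDegree < N →
        Polynomial.aeval (T i) q g ∈ V' := by
      intro q g hg hq
      rw [Polynomial.aeval_eq_sum_range' hq, LinearMap.sum_apply]
      refine Submodule.sum_mem _ fun k hk => ?_
      rw [LinearMap.smul_apply]
      refine Submodule.smul_mem _ _ ?_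
      exact (le_iSup (fun k : Fin N => V.map (T i ^ (k : ℕ))) ⟨k, Finset.mem_range.1 hk⟩)
        (Submodule.mem_map_of_mem hg)
    have hall : ∀ q : Polynomial K, ∀ g ∈ V, Polynomial.aeval (T i) q g ∈ V' := by
      intro q g hg
      have hmod : Polynomial.aeval (T i) q g = Polynomial.aeval (T i) (q % p i) g := by
        conv_lhs => rw [← EuclideanDomain.mod_add_div q (p i), mul_comm (p i)]
        simp [hker i his g hg]
      rw [hmod]
      exact hlow _ g hg (Nat.lt_succ_of_le (Polynomial.natDegree_le_natDegree
        (Polynomial.degree_mod_lt q (hp i his)).le))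
    have hpow : ∀ k : ℕ, ∀ g ∈ V, (T i ^ k) g ∈ V' := by
      intro k g hg
      simpa using hall (Polynomial.X ^ k) g hg
    refine ⟨V', inferInstance, ?_, ?_, ?_⟩
    · simpa using hpow 0 v hvV
    · intro j hj
      rw [hV', iSup_le_iff]
      rintro k _ ⟨g, hg, rfl⟩
      rw [Submodule.mem_comap]
      rcases Set.mem_insert_iff.1 hj with rfl | hj
      · simpa [pow_succ'] using hpow (k + 1) g hg
      · have := hpow k _ (hinv j hj hg)
        rwa [← Module.End.mul_apply, ((hT i j).pow_left k).eq] at this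
    · intro j hj
      suffices V' ≤ LinearMap.ker (Polynomial.aeval (T j) (p j)) from
        fun g hg => LinearMap.mem_ker.1 (this hg)
      rw [hV', iSup_le_iff]
      rintro k _ ⟨g, hg, rfl⟩
      have hc : Commute (Polynomial.aeval (T j) (p j)) (T i ^ (k : ℕ)) := by
        rw [Polynomial.aeval_eq_sum_range]
        exact Commute.sum_left _ _ _ fun m _ => ((hT j i).pow_pow m k).smul_left _
      rw [LinearMap.mem_ker, ← Module.End.mul_apply, hc.eq, Module.End.mul_apply, hker j hj g hg,
        map_zero]

/-- A nonempty open subset of `ℝ^d` contains a finite set generating a dense additive subgroup. -/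
theorem IsOpen.exists_finite_dense_closure {d : ℕ} {U : Set (Fin d → ℝ)} (hU : IsOpen U)
    (hne : U.Nonempty) :
    ∃ s : Set (Fin d → ℝ), s.Finite ∧ s ⊆ U ∧
      Dense (AddSubgroup.closure s : Set (Fin d → ℝ)) := by
  obtain ⟨h, hh⟩ := hne
  have key : ∃ ε : ℝ, ε ≠ 0 ∧ ∀ i : Fin d, h + Pi.single i ε ∈ U ∧
      h + Pi.single i (√2 * ε) ∈ U := by
    have : ∀ᶠ ε : ℝ in nhdsWithin 0 {0}ᶜ, ∀ i : Fin d, h + Pi.single i ε ∈ U ∧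
        h + Pi.single i (√2 * ε) ∈ U := by
      refine Filter.Eventually.filter_mono nhdsWithin_le_nhds ?_
      rw [Filter.eventually_all]
      intro i
      have h1 : Continuous fun ε : ℝ => h + Pi.single (M := fun _ : Fin d => ℝ) i ε :=
        continuous_const.add (continuous_single (A := fun _ : Fin d => ℝ) i)
      have h2 : Continuous fun ε : ℝ => h + Pi.single (M := fun _ : Fin d => ℝ) i (√2 * ε) :=
        h1.comp (continuous_const.mul continuous_id)
      exact (h1.continuousAt.eventually_mem (hU.mem_nhds (by simpa using hh))).and
        (h2.continuousAt.eventually_mem (hU.mem_nhds (by simpa using hh)))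
    obtain ⟨ε, h1, h2⟩ := (this.and self_mem_nhdsWithin).exists
    exact ⟨ε, h2, h1⟩
  obtain ⟨ε, hε, hεU⟩ := key
  set s : Set (Fin d → ℝ) := insert h (Set.range (fun i : Fin d => h + Pi.single i ε) ∪
    Set.range (fun i : Fin d => h + Pi.single i (√2 * ε))) with hs
  refine ⟨s, ((Set.finite_range _).union (Set.finite_range _)).insert h, ?_, ?_⟩
  · rintro x (rfl | ⟨i, rfl⟩ | ⟨i, rfl⟩)
    exacts [hh, (hεU i).1, (hεU i).2]
  set G := (AddSubgroup.closure s).topologicalClosure with hG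
  have hsub : ∀ x ∈ s, x ∈ AddSubgroup.closure s := fun x hx => AddSubgroup.subset_closure hx
  have hdiff : ∀ x, h + x ∈ s → x ∈ AddSubgroup.closure s := fun x hx => by
    simpa using sub_mem (hsub _ hx) (hsub h (Set.mem_insert _ _))
  have hsingle : ∀ (i : Fin d) (t : ℝ), Pi.single i t ∈ G := by
    intro i t
    have hdense : Dense (AddSubgroup.closure {√2 * ε, ε} : Set ℝ) := by
      rw [dense_addSubgroupClosure_pair_iff, mul_div_cancel_right₀ _ hε]
      exact irrational_sqrt_two
    have hle : AddSubgroup.closure {√2 * ε, ε} ≤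
        G.comap (AddMonoidHom.single (fun _ : Fin d => ℝ) i) := by
      rw [AddSubgroup.closure_le]
      rintro x (rfl | rfl)
      · exact AddSubgroup.le_topologicalClosure _
          (hdiff _ (Or.inr (Or.inr ⟨i, rfl⟩)))
      · exact AddSubgroup.le_topologicalClosure _
          (hdiff _ (Or.inr (Or.inl ⟨i, rfl⟩)))
    have hclosed : IsClosed {t : ℝ | Pi.single (M := fun _ : Fin d => ℝ) i t ∈ G} :=
      (AddSubgroup.isClosed_topologicalClosure _).preimage (continuous_single (A := fun _ : Fin d => ℝ) i)
    exact closure_minimal (fun x hx => hle hx) hclosed (hdense t)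
  intro x
  change x ∈ G
  rw [← Finset.univ_sum_single x]
  exact sum_mem fun i _ => hsingle i _

/-- A continuous one-parameter semigroup in a Banach algebra is differentiable. -/
theorem exists_hasDerivAt_of_continuous_of_add {A : Type*} [NormedRing A] [NormedAlgebra ℝ A]
    [CompleteSpace A] (M : ℝ → A) (hM : Continuous M) (h0 : M 0 = 1)
    (hadd : ∀ s t, M (s + t) = M s * M t) :
    ∃ a : A, ∀ t, HasDerivAt M (M t * a) t := by
  set F : ℝ → A := fun t => ∫ s in (0 : ℝ)..t, M s with hF
  have hFd : ∀ t, HasDerivAt F (M t) t := fun t => hM.integral_hasStrictDerivAt 0 t |>.hasDerivAt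
  have hunit : ∃ ε : ℝ, IsUnit (F ε) := by
    have hlim := (hFd 0).tendsto_slope
    rw [h0] at hlim
    have hev := hlim.eventually (Units.isOpen.mem_nhds (isUnit_one : IsUnit (1 : A)))
    obtain ⟨ε, hε, hε0⟩ := (hev.and self_mem_nhdsWithin).exists
    refine ⟨ε, ?_⟩
    have hF0 : F 0 = 0 := by simp [hF]
    have hε' : IsUnit (slope F 0 ε) := hε
    have hne : ε ≠ 0 := hε0
    rw [slope_def_module, hF0, sub_zero, sub_zero] at hε'
    simpa [smul_smul, hne] using (hε'.smul (Units.mk0 ε hne))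
  obtain ⟨ε, B, hB⟩ := hunit
  have hMB : ∀ t, M t = (F (t + ε) - F t) * ↑B⁻¹ := by
    intro t
    rw [Units.eq_mul_inv_iff_mul_eq, hB]
    have hint : ∀ a b : ℝ, IntervalIntegrable M MeasureTheory.volume a b :=
      fun a b => hM.intervalIntegrable a b
    rw [hF]
    simp only
    rw [intervalIntegral.integral_interval_sub_left (hint _ _) (hint _ _)]
    have h := (ContinuousLinearMap.mul ℝ A (M t)).intervalIntegral_comp_comm (hint 0 ε)
    simp only [ContinuousLinearMap.mul_apply', ← hadd] at h
    rw [← h, intervalIntegral.integral_comp_add_left, add_zero]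
  refine ⟨(M ε - 1) * ↑B⁻¹, fun t => ?_⟩
  have h1 : HasDerivAt (fun t => (F (t + ε) - F t) * (↑B⁻¹ : A))
      ((M (t + ε) - M t) * ↑B⁻¹) t :=
    (((hFd (t + ε)).comp_add_const t ε).sub (hFd t)).mul_const _
  rw [← funext hMB, hadd] at h1
  convert h1 using 1
  noncomm_ring

/-- On a generalized eigenvector of its generator, a one-parameter group acts by an exponential
times a polynomial. -/
theorem apply_eq_sum_of_genEigenvector {V : Type*} [NormedAddCommGroup V] [NormedSpace ℂ V]
    [CompleteSpace V] (M : ℝ → V →L[ℂ] V) (h0 : M 0 = 1)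
    (hadd : ∀ s t, M (s + t) = M s * M t) (a : V →L[ℂ] V)
    (hM : ∀ t, HasDerivAt M (M t * a) t) (μ : ℂ) (N : ℕ) (v : V)
    (hv : ((a - μ • 1) ^ N) v = 0) (t : ℝ) :
    M t v = ∑ k ∈ Finset.range N,
      ((t : ℂ) ^ k * ((k.factorial : ℂ))⁻¹ * Complex.exp (μ * t)) • ((a - μ • 1) ^ k) v := by
  set b := a - μ • 1 with hb
  set q : ℕ → ℝ → V := fun n t =>
    ∑ k ∈ Finset.range n, ((t : ℂ) ^ k * ((k.factorial : ℂ))⁻¹) • (b ^ k) v with hq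
  have hid : ∀ t : ℝ, HasDerivAt (fun t : ℝ => (t : ℂ)) 1 t := fun t =>
    Complex.ofRealCLM.hasDerivAt
  have hqd : ∀ n t, HasDerivAt (q (n + 1)) (b (q n t)) t := by
    intro n t
    induction n with
    | zero =>
      have : q 1 = fun _ => v := by
        ext t
        simp [hq]
      rw [show (0 + 1) = 1 from rfl, this]
      simpa [hq] using hasDerivAt_const t v
    | succ n ih =>
      have hs : ∀ n, q (n + 1) = fun t => q n t +
          ((t : ℂ) ^ n * ((n.factorial : ℂ))⁻¹) • (b ^ n) v := by
        intro n
        ext t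
        simp [hq, Finset.sum_range_succ]
      rw [hs (n + 1)]
      refine (ih.add ((((hid t).pow (n + 1)).mul_const _).smul_const _)).congr_deriv ?_
      rw [hs n]
      simp only [map_add, map_smul, pow_succ' b n, mul_apply_eq_comp]
      congr 2
      have h1 : ((n : ℂ) + 1) ≠ 0 := by exact_mod_cast n.succ_ne_zero
      have h2 : (n.factorial : ℂ) ≠ 0 := by exact_mod_cast n.factorial_ne_zero
      rw [Nat.factorial_succ]
      push_cast
      field_simp
  have hqN : q (N + 1) = q N := by
    ext t
    simp only [hq, Finset.sum_range_succ _ N, hv, smul_zero, add_zero]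
  have hq' : ∀ t, HasDerivAt (q N) (b (q N t)) t := fun t => by
    simpa only [hqN] using hqd N t
  have hexp : ∀ t : ℝ, HasDerivAt (fun t : ℝ => Complex.exp (μ * t))
      (Complex.exp (μ * t) * μ) t := fun t => by
    simpa using ((hid t).const_mul μ).cexp
  have hw : ∀ t : ℝ, HasDerivAt (fun t : ℝ => Complex.exp (μ * t) • q N t)
      (a (Complex.exp (μ * t) • q N t)) t := fun t : ℝ => by
    refine ((hexp t).smul (hq' t)).congr_deriv ?_
    rw [show a = b + μ • 1 by simp [hb]]
    simp [mul_smul]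
  have hMneg : ∀ t, HasDerivAt (fun t => M (-t)) (-(M (-t) * a)) t := fun t => by
    simpa [Function.comp_def] using (hM (-t)).scomp t (hasDerivAt_neg t)
  have hu : ∀ t, HasDerivAt (fun t : ℝ => M (-t) (Complex.exp (μ * t) • q N t)) 0 t := fun t => by
    have h := ((ContinuousLinearMap.restrictScalarsL ℂ V V ℝ ℝ).hasFDerivAt.comp_hasDerivAt t
      (hMneg t)).clm_apply (hw t)
    refine h.congr_deriv ?_
    simp
  have hconst := is_const_of_deriv_eq_zero (fun t => (hu t).differentiableAt)
    (fun t => (hu t).deriv) t 0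
  have hq0 : q N 0 = v := by
    rw [← hqN]
    simp [hq, Finset.sum_range_succ']
  simp only [neg_zero, h0, hq0, Complex.ofReal_zero, mul_zero, Complex.exp_zero, one_smul,
    one_apply_eq_self] at hconst
  have := congrArg (M t) hconst
  rw [← mul_apply_eq_comp, ← hadd, add_neg_cancel, h0,
    one_apply_eq_self] at this
  rw [← this, hq, Finset.smul_sum]
  exact Finset.sum_congr rfl fun k _ => by rw [smul_smul, mul_comm]

/-- Matrix coefficients of a continuous one-parameter group on a finite-dimensional space belong
to every algebra of functions containing the parameter and its exponentials. -/
theorem oneParameter_coeff_mem {X V : Type*} [NormedAddCommGroup V] [NormedSpace ℂ V]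
    [FiniteDimensional ℂ V] (S : Subalgebra ℂ (X → ℂ)) (u : X → ℝ)
    (hu : (fun x => (u x : ℂ)) ∈ S) (hexp : ∀ μ : ℂ, (fun x => Complex.exp (μ * u x)) ∈ S)
    (M : ℝ → V →L[ℂ] V) (hM : Continuous M) (h0 : M 0 = 1)
    (hadd : ∀ s t, M (s + t) = M s * M t) (l : V →ₗ[ℂ] ℂ) (v : V) :
    (fun x => l (M (u x) v)) ∈ S := by
  have : CompleteSpace V := FiniteDimensional.complete ℂ V
  obtain ⟨a, ha⟩ := exists_hasDerivAt_of_continuous_of_add M hM h0 hadd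
  have hv : v ∈ ⨆ μ : ℂ, Module.End.maxGenEigenspace (a : Module.End ℂ V) μ := by
    rw [Module.End.iSup_maxGenEigenspace_eq_top]
    trivial
  induction hv using Submodule.iSup_induction' with
  | mem μ w hw =>
    obtain ⟨N, hN⟩ := Module.End.mem_maxGenEigenspace _ _ _ |>.1 hw
    have hN' : ((a - μ • 1) ^ N) w = 0 := by
      rw [← hN]
      have : ((a : Module.End ℂ V) - μ • 1) = ((a - μ • 1 : V →L[ℂ] V) : Module.End ℂ V) := by
        ext; simp
      rw [this, ← ContinuousLinearMap.toLinearMap_pow]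
      rfl
    have : (fun x => l (M (u x) w)) = ∑ k ∈ Finset.range N, l (((a - μ • 1) ^ k) w) •
        ((k.factorial : ℂ)⁻¹ • ((fun x => (u x : ℂ)) ^ k * fun x => Complex.exp (μ * u x))) := by
      ext x
      rw [apply_eq_sum_of_genEigenvector M h0 hadd a ha μ N w hN' (u x), map_sum, Finset.sum_apply]
      refine Finset.sum_congr rfl fun k _ => ?_
      simp
      ring
    rw [this]
    exact sum_mem fun k _ => S.smul_mem (S.smul_mem (S.mul_mem (S.pow_mem hu k) (hexp μ)) _) _
  | zero =>
    simp only [map_zero]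
    exact S.zero_mem
  | add x y _ _ hx hy =>
    simp only [map_add]
    exact S.add_mem hx hy

/-- Matrix coefficients of a continuous representation of `ℝ^d` on a finite-dimensional space
belong to every algebra of functions containing the coordinates and their exponentials. -/
theorem representation_coeff_mem {d : ℕ} {V : Type*} [NormedAddCommGroup V] [NormedSpace ℂ V]
    [FiniteDimensional ℂ V] (S : Subalgebra ℂ ((Fin d → ℝ) → ℂ))
    (hu : ∀ i, (fun x : Fin d → ℝ => (x i : ℂ)) ∈ S)
    (hexp : ∀ i, ∀ μ : ℂ, (fun x : Fin d → ℝ => Complex.exp (μ * x i)) ∈ S)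
    (M : (Fin d → ℝ) → V →L[ℂ] V) (hM : Continuous M) (h0 : M 0 = 1)
    (hadd : ∀ s t, M (s + t) = M s * M t) (l : V →ₗ[ℂ] ℂ) (v : V) :
    (fun x => l (M x v)) ∈ S := by
  suffices H : ∀ (s : Finset (Fin d)) (l : V →ₗ[ℂ] ℂ),
      (fun x : Fin d → ℝ => l (M (∑ i ∈ s, Pi.single i (x i)) v)) ∈ S by
    simpa only [Finset.univ_sum_single] using H Finset.univ l
  intro s
  induction s using Finset.induction_on with
  | empty =>
    intro l
    simp only [Finset.sum_empty, h0, one_apply_eq_self]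
    exact S.algebraMap_mem (l v)
  | insert i s his ih =>
    intro l
    set b := Module.finBasis ℂ V
    have : (fun x : Fin d → ℝ => l (M (∑ j ∈ insert i s, Pi.single j (x j)) v)) =
        ∑ j, (fun x : Fin d → ℝ => b.coord j (M (∑ j ∈ s, Pi.single j (x j)) v)) *
          (fun x : Fin d → ℝ => l (M (Pi.single i (x i)) (b j))) := by
      ext x
      rw [Finset.sum_insert his, hadd, mul_apply_eq_comp]
      conv_lhs => rw [← b.sum_repr (M (∑ j ∈ s, Pi.single j (x j)) v)]
      simp only [map_sum, map_smul, smul_eq_mul, Finset.sum_apply, Pi.mul_apply,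
        Module.Basis.coord_apply]
    rw [this]
    refine sum_mem fun j _ => S.mul_mem (ih _) ?_
    refine oneParameter_coeff_mem S (fun x => x i) (hu i) (hexp i)
      (fun t => M (Pi.single i t))
      (hM.comp (continuous_single (A := fun _ : Fin d => ℝ) i)) (by simp [h0]) ?_ l (b j)
    intro p r
    rw [Pi.single_add, hadd]

/-- The algebra of complex-valued exponential polynomials on `ℝ^d`. -/
def expPolySubalgebra (d : ℕ) : Subalgebra ℂ ((Fin d → ℝ) → ℂ) where
  carrier := {F | ∃ (ι : Type) (_ : Fintype ι) (P : ι → MvPolynomial (Fin d) ℂ)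
    (lam : ι → Fin d → ℂ), ∀ x : Fin d → ℝ,
      F x = ∑ k, MvPolynomial.eval (fun i => (x i : ℂ)) (P k) *
        Complex.exp (∑ i, lam k i * x i)}
  mul_mem' := by
    rintro F G ⟨ι, _, P, lam, hF⟩ ⟨κ, _, Q, mu, hG⟩
    refine ⟨ι × κ, inferInstance, fun k => P k.1 * Q k.2, fun k => lam k.1 + mu k.2, fun x => ?_⟩
    rw [Pi.mul_apply, hF, hG, Finset.sum_mul_sum, ← Finset.univ_product_univ, Finset.sum_product]
    refine Finset.sum_congr rfl fun k _ => Finset.sum_congr rfl fun l _ => ?_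
    simp only [map_mul, Pi.add_apply, add_mul, Finset.sum_add_distrib, Complex.exp_add]
    ring
  add_mem' := by
    rintro F G ⟨ι, _, P, lam, hF⟩ ⟨κ, _, Q, mu, hG⟩
    refine ⟨ι ⊕ κ, inferInstance, Sum.elim P Q, Sum.elim lam mu, fun x => ?_⟩
    simp [hF, hG]
  algebraMap_mem' := fun c =>
    ⟨Unit, inferInstance, fun _ => MvPolynomial.C c, fun _ => 0, fun x => by simp⟩

theorem coord_mem_expPolySubalgebra {d : ℕ} (i : Fin d) :
    (fun x : Fin d → ℝ => (x i : ℂ)) ∈ expPolySubalgebra d :=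
  ⟨Unit, inferInstance, fun _ => MvPolynomial.X i, fun _ => 0, fun x => by simp⟩

theorem exp_mem_expPolySubalgebra {d : ℕ} (i : Fin d) (μ : ℂ) :
    (fun x : Fin d → ℝ => Complex.exp (μ * x i)) ∈ expPolySubalgebra d :=
  ⟨Unit, inferInstance, fun _ => 1, fun _ => Pi.single i μ, fun x => by
    simp [Pi.single_apply]⟩

theorem isExpPolyReal_of_mem {d : ℕ} {f : (Fin d → ℝ) → ℝ}
    (hf : (fun x => (f x : ℂ)) ∈ expPolySubalgebra d) : IsExpPolyReal f := by
  obtain ⟨ι, _, P, lam, h⟩ := hf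
  let e := Fintype.equivFin ι
  refine ⟨Fintype.card ι, P ∘ e.symm, lam ∘ e.symm, fun x => ?_⟩
  refine (h x).trans ?_
  exact (e.symm.sum_comp fun k => MvPolynomial.eval (fun i => (x i : ℂ)) (P k) *
        Complex.exp (∑ i, lam k i * x i)).symm

/-- Translation by `y`, acting on complex-valued functions. -/
def translateEnd {E : Type*} [Add E] (y : E) : Module.End ℂ (E → ℂ) :=
  LinearMap.funLeft ℂ ℂ (· + y)

theorem translateEnd_apply {E : Type*} [Add E] (y : E) (g : E → ℂ) (x : E) :
    translateEnd y g x = g (x + y) := rfl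

theorem translateEnd_add {E : Type*} [AddCommSemigroup E] (y z : E) (g : E → ℂ) :
    translateEnd (y + z) g = translateEnd y (translateEnd z g) := by
  ext x
  simp only [translateEnd_apply, add_assoc]

theorem translateEnd_zero {E : Type*} [AddMonoid E] (g : E → ℂ) : translateEnd 0 g = g := by
  ext x
  simp only [translateEnd_apply, add_zero]

theorem translateEnd_pow_apply {E : Type*} [AddCommMonoid E] (y : E) (k : ℕ) (g : E → ℂ) (x : E) :
    (translateEnd y ^ k) g x = g (x + k • y) := by
  induction k generalizing x with
  | zero => simp
  | succ k ih =>
    rw [pow_succ', Module.End.mul_apply, translateEnd_apply, ih, succ_nsmul', add_assoc]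

theorem continuous_translateEnd {E : Type*} [TopologicalSpace E] [Add E] [ContinuousAdd E]
    {g : E → ℂ} (hg : Continuous g) : Continuous fun y => translateEnd y g :=
  continuous_pi fun _ => hg.comp (continuous_const.add continuous_id)

/-- A finite-dimensional space of functions which is invariant under a set of translations
contains the translates of each of its continuous members by the closed subgroup generated by that
set. -/
theorem translate_mem_of_dense {E : Type*} [AddCommGroup E] [TopologicalSpace E] [ContinuousAdd E]
    (V : Submodule ℂ (E → ℂ)) [FiniteDimensional ℂ V] (s : Set E)
    (hs : Dense (AddSubgroup.closure s : Set E)) (hV : ∀ h ∈ s, V ≤ V.comap (translateEnd h))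
    {g : E → ℂ} (hg : Continuous g) (hgV : g ∈ V) (y : E) : translateEnd y g ∈ V := by
  have hsub : ∀ z ∈ AddSubgroup.closure s, ∀ g ∈ V, translateEnd z g ∈ V := by
    intro z hz
    induction hz using AddSubgroup.closure_induction with
    | mem z hz => exact fun g hg => hV z hz hg
    | zero => exact fun g hg => by rwa [translateEnd_zero]
    | add a b _ _ ha hb =>
        intro g hg
        rw [translateEnd_add]
        exact ha _ (hb g hg)
    | neg a _ ha =>
      intro g hg
      have hinj : Function.Injective ((translateEnd a).restrict ha) := by
        intro p q hpq
        have := congrArg (fun r : V => translateEnd (-a) (r : E → ℂ)) hpq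
        simpa [LinearMap.restrict_apply, ← translateEnd_add, translateEnd_zero] using this
      obtain ⟨p, hp⟩ := LinearMap.injective_iff_surjective.1 hinj ⟨g, hg⟩
      have hp' : translateEnd a (p : E → ℂ) = g := congrArg Subtype.val hp
      rw [← hp', ← translateEnd_add, neg_add_cancel, translateEnd_zero]
      exact p.2
  have hclosed : IsClosed {z | translateEnd z g ∈ V} :=
    V.closed_of_finiteDimensional.preimage (continuous_translateEnd hg)
  exact closure_minimal (fun z hz => hsub z hz g hgV) hclosed (hs y)

/-- A continuous function on `ℝ^d` whose translates span a finite-dimensional space is an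
exponential polynomial. -/
theorem mem_expPolySubalgebra_of_translate_mem {d : ℕ} {f : (Fin d → ℝ) → ℂ} (hf : Continuous f)
    (V : Submodule ℂ ((Fin d → ℝ) → ℂ)) [FiniteDimensional ℂ V] (hV : ∀ y, translateEnd y f ∈ V) :
    f ∈ expPolySubalgebra d := by
  set W : Submodule ℂ ((Fin d → ℝ) → ℂ) := Submodule.span ℂ (Set.range fun y => translateEnd y f)
    with hW
  have hWV : W ≤ V := Submodule.span_le.2 (by rintro _ ⟨y, rfl⟩; exact hV y)
  have : FiniteDimensional ℂ W := Submodule.finiteDimensional_of_le hWV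
  have hfW : f ∈ W := Submodule.subset_span ⟨0, translateEnd_zero f⟩
  have hinv : ∀ y, ∀ g ∈ W, translateEnd y g ∈ W := by
    intro y
    change W ≤ W.comap (translateEnd y)
    rw [hW, Submodule.span_le]
    rintro _ ⟨z, rfl⟩
    exact Submodule.subset_span ⟨y + z, translateEnd_add y z f⟩
  have hcont : ∀ g ∈ W, Continuous g := by
    intro g hg
    induction hg using Submodule.span_induction with
    | mem g hg =>
      obtain ⟨y, rfl⟩ := hg
      exact hf.comp (continuous_id.add continuous_const)
    | zero => exact continuous_const
    | add g h _ _ hg hh => exact hg.add hh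
    | smul c g _ hg => exact hg.const_smul c
  let φ : W ≃ₗ[ℂ] (Fin (Module.finrank ℂ W) → ℂ) := (Module.finBasis ℂ W).equivFun
  let M : (Fin d → ℝ) → (Fin (Module.finrank ℂ W) → ℂ) →L[ℂ] (Fin (Module.finrank ℂ W) → ℂ) :=
    fun y => LinearMap.toContinuousLinearMap
      (φ.toLinearMap ∘ₗ (translateEnd y).restrict (hinv y) ∘ₗ φ.symm.toLinearMap)
  have hMapply : ∀ y v, M y v = φ ⟨translateEnd y (φ.symm v), hinv y _ (φ.symm v).2⟩ :=
    fun y v => rfl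
  have hM : Continuous M := by
    rw [continuous_clm_apply]
    intro v
    have hφ : Continuous φ := φ.toLinearMap.continuous_of_finiteDimensional
    exact hφ.comp ((continuous_translateEnd (hcont _ (φ.symm v).2)).subtype_mk _)
  have h0 : M 0 = 1 := by
    ext1 v
    simp [hMapply, translateEnd_zero]
  have hadd : ∀ s t, M (s + t) = M s * M t := by
    intro s t
    ext1 v
    simp [hMapply, translateEnd_add]
  let l : (Fin (Module.finrank ℂ W) → ℂ) →ₗ[ℂ] ℂ :=
    LinearMap.proj 0 ∘ₗ W.subtype ∘ₗ φ.symm.toLinearMap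
  have hfl : f = fun x => l (M x (φ ⟨f, hfW⟩)) := by
    ext x
    simp [l, hMapply, translateEnd_apply]
  rw [hfl]
  exact representation_coeff_mem _ coord_mem_expPolySubalgebra exp_mem_expPolySubalgebra
    M hM h0 hadd l _

theorem rado_higher_dimensions
    {d n : ℕ} (U : Set (Fin d → ℝ)) (hUopen : IsOpen U) (hUne : U.Nonempty)
    (a : Fin (n + 1) → (Fin d → ℝ) → ℝ)
    (ha : ∀ i, ContinuousOn (a i) U)
    (hnz : ∃ h ∈ U, ∃ i, a i h ≠ 0)
    (f : (Fin d → ℝ) → ℝ) (hf : Continuous f)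
    (heq : ∀ x : Fin d → ℝ, ∀ h ∈ U, ∑ i : Fin (n + 1), a i h * f (x + (i : ℕ) • h) = 0) :
    IsExpPolyReal f := by
  obtain ⟨h₀, hh₀, i₀, hi₀⟩ := hnz
  obtain ⟨s, hsfin, hsU, hsdense⟩ := IsOpen.exists_finite_dense_closure
    ((ha i₀).isOpen_inter_preimage hUopen isOpen_compl_singleton) ⟨h₀, hh₀, hi₀⟩
  have hfc : Continuous fun x => (f x : ℂ) := Complex.continuous_ofReal.comp hf
  let p : (Fin d → ℝ) → Polynomial ℂ := fun h =>
    ∑ i : Fin (n + 1), Polynomial.monomial (i : ℕ) (a i h : ℂ)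
  have hp : ∀ h ∈ s, p h ≠ 0 := by
    intro h hh hp
    have hcoeff := congrArg (fun q => Polynomial.coeff q (i₀ : ℕ)) hp
    simp only [p, Polynomial.finsetSum_coeff, Polynomial.coeff_monomial, Fin.val_inj,
      Finset.sum_ite_eq', Finset.mem_univ, if_true, Polynomial.coeff_zero] at hcoeff
    exact (hsU hh).2 (by exact_mod_cast hcoeff)
  have hpf : ∀ h ∈ s, Polynomial.aeval (translateEnd h) (p h) (fun x => (f x : ℂ)) = 0 := by
    intro h hh
    ext x
    have hx := heq x h (hsU hh).1
    simp only [p, map_sum, Polynomial.aeval_monomial, LinearMap.sum_apply, Finset.sum_apply,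
      Module.End.mul_apply, Module.algebraMap_end_apply, Pi.smul_apply, translateEnd_pow_apply,
      smul_eq_mul, Pi.zero_apply]
    exact_mod_cast hx
  have hcomm : ∀ y z : Fin d → ℝ, Commute (translateEnd y) (translateEnd z) := fun y z =>
    LinearMap.ext fun g => by
      rw [Module.End.mul_apply, Module.End.mul_apply, ← translateEnd_add, ← translateEnd_add,
        add_comm]
  obtain ⟨V, _, hfV, hVinv⟩ := exists_finiteDimensional_invariant_s3 translateEnd hcomm p
    (fun x => (f x : ℂ)) s hsfin hp hpf
  exact isExpPolyReal_of_mem (mem_expPolySubalgebra_of_translate_mem hfc V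
    (translate_mem_of_dense V s hsdense hVinv hfc hfV))
end

section
/- (Solution of the Popoviciu–Ionescu functional equation in one variable.) Let n be a positive integer and let f : ℝ → ℝ be a continuous function such that for all x, h ∈ ℝ, the determinant of the (n+1)×(n+1) matrix whose (i,j) entry is f(x + (i+j)h), for 0 ≤ i, j ≤ n, equals zero. Then f is an exponential polynomial. -/
/-- A real function of one variable is an exponential polynomial if it is a finite sum
of terms `P_k(t) * exp(λ_k t)` with `P_k` complex polynomials and `λ_k ∈ ℂ`
(the sum being real-valued). -/
def IsExpPoly1Real (f : ℝ → ℝ) : Prop :=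
  ∃ (m : ℕ) (P : Fin m → Polynomial ℂ) (lam : Fin m → ℂ),
    ∀ t : ℝ, (f t : ℂ) = ∑ k, Polynomial.eval (t : ℂ) (P k) * Complex.exp (lam k * t)

open Finset in
/-- The `n × n` Hankel matrix `(a (k + i + j))` of a two-sided sequence has trivial kernel. -/
def HankelNonsingular {K : Type*} [Field K] (a : ℤ → K) (n : ℕ) (k : ℤ) : Prop :=
  ∀ d : ℕ → K, (∀ i < n, ∑ j ∈ range n, d j * a (k + i + j) = 0) → ∀ j < n, d j = 0

namespace HankelNonsingular

open Finset

variable {K : Type*} [Field K] {a : ℤ → K} {n : ℕ} {k : ℤ}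

theorem not_iff :
    ¬ HankelNonsingular a n k ↔ ∃ d : ℕ → K,
      (∀ i < n, ∑ j ∈ range n, d j * a (k + i + j) = 0) ∧ ∃ j < n, d j ≠ 0 := by
  simp only [HankelNonsingular]
  push Not
  rfl

theorem last_ne_zero (h : HankelNonsingular a n (k + 1)) {c : ℕ → K}
    (hc : ∀ i < n + 1, ∑ j ∈ range (n + 1), c j * a (k + i + j) = 0)
    (hne : ∃ j < n + 1, c j ≠ 0) : c n ≠ 0 := by
  intro h0
  have hz := h c fun i hi => by
    have := hc (i + 1) (by omega)
    rw [sum_range_succ, h0, zero_mul, add_zero] at this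
    rw [← this]
    refine sum_congr rfl fun j _ => ?_
    congr 2
    push_cast
    ring
  obtain ⟨j, hj, hj0⟩ := hne
  rcases Nat.lt_succ_iff_lt_or_eq.mp hj with hj | rfl
  · exact hj0 (hz j hj)
  · exact hj0 h0

theorem first_ne_zero (h : HankelNonsingular a n (k + 1)) {c : ℕ → K}
    (hc : ∀ i < n + 1, ∑ j ∈ range (n + 1), c j * a (k + i + j) = 0)
    (hne : ∃ j < n + 1, c j ≠ 0) : c 0 ≠ 0 := by
  intro h0
  have hz := h (fun j => c (j + 1)) fun i hi => by
    have := hc i (by omega)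
    rw [sum_range_succ', h0, zero_mul, add_zero] at this
    rw [← this]
    refine sum_congr rfl fun j _ => ?_
    congr 2
    push_cast
    ring
  obtain ⟨j, hj, hj0⟩ := hne
  rcases j with _ | j
  · exact hj0 h0
  · exact hj0 (hz j (by omega))

theorem sum_mul_comm (c d : ℕ → K) (n : ℕ) (k : ℤ)
    (hc : ∀ i < n, ∑ j ∈ range n, c j * a (k + i + j) = 0) :
    ∑ i ∈ range n, c i * ∑ j ∈ range n, d j * a (k + i + j) = 0 := by
  simp_rw [mul_sum]
  rw [sum_comm]
  refine sum_eq_zero fun j hj => ?_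
  have := hc j (mem_range.mp hj)
  calc ∑ i ∈ range n, c i * (d j * a (k + i + j))
      = d j * ∑ i ∈ range n, c i * a (k + j + i) := by
        rw [mul_sum]
        refine sum_congr rfl fun i _ => ?_
        rw [add_right_comm k (j : ℤ) i]
        ring
    _ = 0 := by rw [this, mul_zero]

theorem of_add_one (h : HankelNonsingular a n (k + 1))
    (hs : ¬ HankelNonsingular a (n + 1) k) : HankelNonsingular a n k := by
  obtain ⟨c, hc, hne⟩ := not_iff.mp hs
  have hcn := h.last_ne_zero hc hne
  intro d hd
  set e : ℕ → K := fun j => if j < n then d j else 0 with he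
  have hsum : ∀ i : ℤ, ∑ j ∈ range (n + 1), e j * a (k + i + j)
      = ∑ j ∈ range n, d j * a (k + i + j) := fun i => by
    rw [sum_range_succ]
    simp only [he, lt_irrefl, if_false, zero_mul, add_zero]
    exact sum_congr rfl fun j hj => by rw [if_pos (mem_range.mp hj)]
  have hp := sum_mul_comm c e (n + 1) k hc
  rw [sum_range_succ, sum_eq_zero, zero_add] at hp
  · have hlast : ∑ j ∈ range (n + 1), e j * a (k + n + j) = 0 :=
      (mul_eq_zero.mp hp).resolve_left hcn
    refine h d fun i hi => ?_
    have hrow : ∑ j ∈ range n, d j * a (k + (i + 1 : ℕ) + j) = 0 := by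
      rcases (Nat.succ_le_of_lt hi).lt_or_eq with hlt | heq
      · exact hd (i + 1) hlt
      · have heq' : i + 1 = n := heq
        rw [heq', ← hsum]
        exact hlast
    rw [← hrow]
    refine sum_congr rfl fun j _ => ?_
    congr 2
    push_cast
    ring
  · intro i hi
    rw [hsum, hd i (mem_range.mp hi), mul_zero]

theorem add_two (h : HankelNonsingular a n (k + 1))
    (hs : ¬ HankelNonsingular a (n + 1) k) : HankelNonsingular a n (k + 2) := by
  obtain ⟨c, hc, hne⟩ := not_iff.mp hs
  have hc0 := h.first_ne_zero hc hne
  intro d hd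
  set e : ℕ → K := fun j => if j = 0 then 0 else d (j - 1) with he
  have hsum : ∀ i : ℤ, ∑ j ∈ range (n + 1), e j * a (k + i + j)
      = ∑ j ∈ range n, d j * a (k + 1 + i + j) := fun i => by
    rw [sum_range_succ']
    simp only [he, if_true, zero_mul, add_zero]
    refine sum_congr rfl fun j _ => ?_
    simp only [Nat.add_eq_zero_iff, one_ne_zero, and_false, if_false, Nat.add_sub_cancel]
    congr 2
    push_cast
    ring
  have hp := sum_mul_comm c e (n + 1) k hc
  have hrow : ∀ i < n, ∑ j ∈ range n, d j * a (k + 1 + (i + 1 : ℕ) + j) = 0 := fun i hi => by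
    rw [← hd i hi]
    refine sum_congr rfl fun j _ => ?_
    congr 2
    push_cast
    ring
  rw [sum_range_succ', sum_eq_zero, zero_add] at hp
  · have hfirst := (mul_eq_zero.mp hp).resolve_left hc0
    rw [hsum] at hfirst
    refine h d fun i hi => ?_
    rcases i with _ | i
    · exact hfirst
    · exact hrow i (by omega)
  · intro i hi
    rw [hsum, hrow i (mem_range.mp hi), mul_zero]

theorem forall_of_exists (hs : ∀ k, ¬ HankelNonsingular a (n + 1) k)
    (h : HankelNonsingular a n k) (l : ℤ) : HankelNonsingular a n l := by
  have hup : ∀ k, HankelNonsingular a n k → HankelNonsingular a n (k + 1) := fun k hk => by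
    have := add_two (k := k - 1) (by rwa [sub_add_cancel]) (hs _)
    rwa [show k - 1 + 2 = k + 1 by ring] at this
  have hdown : ∀ k, HankelNonsingular a n k → HankelNonsingular a n (k - 1) := fun k hk =>
    of_add_one (by rwa [sub_add_cancel]) (hs _)
  rw [show l = k + (l - k) by ring]
  induction l - k using Int.induction_on with
  | zero => rwa [add_zero]
  | succ i ih => rw [← add_assoc]; exact hup _ ih
  | pred i ih => rw [← add_sub_assoc]; exact hdown _ ih

end HankelNonsingular

open Finset in
/-- A two-sided sequence whose Hankel matrices of size `n + 1` are all singular satisfies a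
linear recurrence of order at most `n` with nonzero extreme coefficients. -/
theorem exists_recurrence_of_hankel {K : Type*} [Field K] {a : ℤ → K} (n : ℕ)
    (hs : ∀ k, ¬ HankelNonsingular a (n + 1) k) :
    ∃ m ≤ n, ∃ c : ℕ → K, c 0 ≠ 0 ∧ c m ≠ 0 ∧
      ∀ k, ∑ j ∈ range (m + 1), c j * a (k + j) = 0 := by
  induction n with
  | zero =>
    refine ⟨0, le_rfl, fun _ => 1, one_ne_zero, one_ne_zero, fun k => ?_⟩
    obtain ⟨d, hd, j, hj, hj0⟩ := HankelNonsingular.not_iff.mp (hs k)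
    obtain rfl : j = 0 := by omega
    have := hd 0 (by omega)
    simpa [hj0] using this
  | succ n ih =>
    by_cases hex : ∃ k, HankelNonsingular a (n + 1) k
    · obtain ⟨k₀, hk₀⟩ := hex
      have hns := HankelNonsingular.forall_of_exists hs hk₀
      have hker : ∀ k, ∃ c : ℕ → K, c 0 ≠ 0 ∧ c (n + 1) = 1 ∧
          ∀ i < n + 2, ∑ j ∈ range (n + 2), c j * a (k + i + j) = 0 := fun k => by
        obtain ⟨d, hd, hne⟩ := HankelNonsingular.not_iff.mp (hs k)
        have h0 := (hns (k + 1)).first_ne_zero hd hne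
        have hl := (hns (k + 1)).last_ne_zero hd hne
        refine ⟨fun j => (d (n + 1))⁻¹ * d j, mul_ne_zero (inv_ne_zero hl) h0,
          inv_mul_cancel₀ hl, fun i hi => ?_⟩
        simp_rw [mul_assoc]
        rw [← mul_sum, hd i hi, mul_zero]
      choose c hc0 hc1 hc using hker
      have hstep : ∀ k, ∀ j < n + 2, c k j = c (k + 1) j := fun k j hj => by
        rcases Nat.lt_succ_iff_lt_or_eq.mp hj with hj | rfl
        · refine sub_eq_zero.mp (hns (k + 1) (fun j => c k j - c (k + 1) j) (fun i hi => ?_) j hj)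
          have h₁ := hc k (i + 1) (by omega)
          have h₂ := hc (k + 1) i (by omega)
          rw [sum_range_succ, hc1] at h₁ h₂
          simp_rw [sub_mul]
          rw [sum_sub_distrib]
          have e : k + ((i + 1 : ℕ) : ℤ) = k + 1 + i := by push_cast; ring
          rw [e] at h₁
          linear_combination h₁ - h₂
        · rw [hc1, hc1]
      have hall : ∀ k, ∀ j < n + 2, c k j = c 0 j := fun k j hj => by
        induction k using Int.induction_on with
        | zero => rfl
        | succ i ih => rw [← hstep _ j hj, ih]
        | pred i ih => rw [hstep _ j hj, sub_add_cancel, ih]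
      refine ⟨n + 1, le_rfl, c 0, hc0 0, by rw [hc1]; exact one_ne_zero, fun k => ?_⟩
      have := hc k 0 (by omega)
      rw [← this]
      refine sum_congr rfl fun j hj => ?_
      rw [hall k j (mem_range.mp hj), Nat.cast_zero, add_zero]
    · push Not at hex
      obtain ⟨m, hm, h⟩ := ih hex
      exact ⟨m, by omega, h⟩

open Finset in
/-- All translates of a sequence with a reversible recurrence of order `m` lie in the span of
`m` consecutive ones. -/
theorem shift_mem_span_of_recurrence {K : Type*} [Field K] {a : ℤ → K} {m : ℕ} {c : ℕ → K}
    (h0 : c 0 ≠ 0) (hm : c m ≠ 0) (hc : ∀ k, ∑ j ∈ range (m + 1), c j * a (k + j) = 0) (q : ℤ) :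
    (fun k => a (k + q)) ∈ Submodule.span K (Set.range fun (j : Fin m) (k : ℤ) => a (k + j)) := by
  set V := Submodule.span K (Set.range fun (j : Fin m) (k : ℤ) => a (k + j)) with hV
  have hup : ∀ r : ℕ, ∀ q : ℤ, 0 ≤ q → q < m + r → (fun k => a (k + q)) ∈ V := by
    intro r
    induction r with
    | zero =>
      intro q hq hqm
      refine Submodule.subset_span ⟨⟨q.toNat, by omega⟩, ?_⟩
      funext k
      simp [Int.toNat_of_nonneg hq]
    | succ r ih =>
      intro q hq hqm
      by_cases hlt : q < m + r
      · exact ih q hq hlt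
      have hrec : (fun k => a (k + q)) =
          (-(c m)⁻¹) • ∑ j ∈ range m, c j • fun k : ℤ => a (k + (q - m + j)) := by
        funext k
        have := hc (k + (q - m))
        rw [sum_range_succ, show k + (q - m) + (m : ℤ) = k + q by ring] at this
        simp only [Pi.smul_apply, Finset.sum_apply, smul_eq_mul]
        simp_rw [← add_assoc k (q - m)]
        field_simp
        linear_combination this
      rw [hrec]
      refine V.smul_mem _ (V.sum_mem fun j hj => V.smul_mem _ (ih _ ?_ ?_))
      · push_cast at *; omega
      · have := mem_range.mp hj
        push_cast at *; omega
  have hnonneg : ∀ q : ℤ, 0 ≤ q → (fun k => a (k + q)) ∈ V := fun q hq =>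
    hup (q.toNat + 1) q hq (by push_cast; omega)
  have hdown : ∀ r : ℕ, ∀ q : ℤ, -(r : ℤ) ≤ q → (fun k => a (k + q)) ∈ V := by
    intro r
    induction r with
    | zero => intro q hq; exact hnonneg q (by simpa using hq)
    | succ r ih =>
      intro q hq
      by_cases hlt : -(r : ℤ) ≤ q
      · exact ih q hlt
      have hrec : (fun k => a (k + q)) =
          (-(c 0)⁻¹) • ∑ j ∈ range m, c (j + 1) • fun k : ℤ => a (k + (q + 1 + j)) := by
        funext k
        have := hc (k + q)
        rw [sum_range_succ', Nat.cast_zero, add_zero] at this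
        simp only [Pi.smul_apply, Finset.sum_apply, smul_eq_mul]
        have e : ∀ j : ℕ, k + q + ((j + 1 : ℕ) : ℤ) = k + (q + 1 + j) := fun j => by
          push_cast; ring
        simp_rw [e] at this
        field_simp
        linear_combination this
      rw [hrec]
      refine V.smul_mem _ (V.sum_mem fun j _ => V.smul_mem _ (ih _ ?_))
      push_cast at *; omega
  exact hdown (-q).toNat q (by omega)

/-- If all contiguous Hankel determinants of size `n + 1` vanish, then so do all
determinants `det (a (p i + q j))` of that size. -/
theorem det_add_eq_zero_of_hankel {K : Type*} [Field K] {a : ℤ → K} {n : ℕ}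
    (h : ∀ k : ℤ, Matrix.det (Matrix.of fun i j : Fin (n + 1) => a (k + i + j)) = 0)
    (p q : Fin (n + 1) → ℤ) : Matrix.det (Matrix.of fun i j => a (p i + q j)) = 0 := by
  have hs : ∀ k, ¬ HankelNonsingular a (n + 1) k := fun k hk => by
    obtain ⟨v, hv, hv0⟩ := Matrix.exists_mulVec_eq_zero_iff.mpr (h k)
    refine hv (funext fun j => ?_)
    have := hk (fun j => if hj : j < n + 1 then v ⟨j, hj⟩ else 0) (fun i hi => ?_) j j.2
    · rw [dif_pos j.2] at this
      exact this
    · have hrow := congrFun hv0 ⟨i, hi⟩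
      rw [Finset.sum_range]
      simp only [Fin.is_lt, dif_pos]
      simpa [Matrix.mulVec, dotProduct, mul_comm] using hrow
  obtain ⟨m, hm, c, h0, hcm, hc⟩ := exists_recurrence_of_hankel n hs
  have hli : ¬ LinearIndependent K fun (j : Fin (n + 1)) (k : ℤ) => a (k + q j) := fun hli => by
    have hspan := Submodule.span_le.mpr (Set.range_subset_iff.mpr fun j =>
      shift_mem_span_of_recurrence h0 hcm hc (q j))
    have hfin := Module.Finite.span_of_finite K
      (Set.finite_range fun (j : Fin m) (k : ℤ) => a (k + j))
    have hle := Submodule.finrank_mono hspan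
    have hcard := finrank_range_le_card (R := K) fun (j : Fin m) (k : ℤ) => a (k + j)
    rw [finrank_span_eq_card hli] at hle
    have := hle.trans hcard
    simp only [Fintype.card_fin] at this
    omega
  obtain ⟨g, hg, j, hj⟩ := Fintype.not_linearIndependent_iff.mp hli
  refine Matrix.exists_mulVec_eq_zero_iff.mp ⟨g, fun hg0 => hj (congrFun hg0 j), ?_⟩
  funext i
  have := congrFun hg (p i)
  simpa [Matrix.mulVec, dotProduct, mul_comm] using this

open Filter Topology in
/-- A continuous one-parameter group in a Banach algebra is of the form `t ↦ exp (t A)`. -/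
theorem exists_eq_exp_smul_of_map_add {𝔸 : Type*} [NormedRing 𝔸] [NormedAlgebra ℝ 𝔸]
    [CompleteSpace 𝔸] {B : ℝ → 𝔸} (hB : Continuous B) (h0 : B 0 = 1)
    (hadd : ∀ x y, B (x + y) = B x * B y) :
    ∃ A : 𝔸, ∀ t : ℝ, B t = NormedSpace.exp (t • A) := by
  set Φ : ℝ → 𝔸 := fun u => ∫ t in (0 : ℝ)..u, B t with hΦ
  have hΦd : ∀ u, HasDerivAt Φ (B u) u := fun u => hB.integral_hasStrictDerivAt 0 u |>.hasDerivAt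
  obtain ⟨ε, hunit⟩ : ∃ ε : ℝ, IsUnit (Φ ε) := by
    have hslope := (hasDerivAt_iff_tendsto_slope.mp (hΦd 0))
    rw [h0] at hslope
    have hev : ∀ᶠ u in 𝓝[≠] (0 : ℝ), IsUnit (slope Φ 0 u) :=
      hslope.eventually (Units.nhds (1 : 𝔸ˣ))
    obtain ⟨u, hu, hu0⟩ := (hev.and self_mem_nhdsWithin).exists
    refine ⟨u, ?_⟩
    have hu0' : u ≠ 0 := hu0
    have : Φ u = algebraMap ℝ 𝔸 u * slope Φ 0 u := by
      rw [← Algebra.smul_def, slope_def_module, smul_smul, sub_zero, mul_inv_cancel₀ hu0', one_smul]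
      simp [hΦ]
    rw [this]
    exact ((isUnit_iff_ne_zero.mpr hu0').map (algebraMap ℝ 𝔸)).mul hu
  obtain ⟨C, hC⟩ := hunit
  have hmul : ∀ x, B x * C = Φ (x + ε) - Φ x := fun x => by
    rw [hC, hΦ]
    simp only
    rw [intervalIntegral.integral_interval_sub_left (hB.intervalIntegrable _ _)
      (hB.intervalIntegrable _ _)]
    have hL := (ContinuousLinearMap.mul ℝ 𝔸 (B x)).intervalIntegral_comp_comm
      (hB.intervalIntegrable (μ := MeasureTheory.volume) 0 ε)
    have hshift := intervalIntegral.integral_comp_add_left (a := 0) (b := ε) B x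
    simp only [ContinuousLinearMap.mul_apply', ← hadd] at hL
    rw [← hL, hshift, add_zero]
  have hBeq : ∀ x, B x = (Φ (x + ε) - Φ x) * (↑C⁻¹ : 𝔸) := fun x => by
    rw [← hmul, Units.mul_inv_cancel_right]
  have hd0 : ∃ A, HasDerivAt B A 0 := by
    refine ⟨(B (0 + ε) - B 0) * (↑C⁻¹ : 𝔸), ?_⟩
    have := (((hΦd (0 + ε)).comp_add_const 0 ε).sub (hΦd 0)).mul_const (↑C⁻¹ : 𝔸)
    exact this.congr_of_eventuallyEq (Eventually.of_forall hBeq)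
  obtain ⟨A, hA⟩ := hd0
  refine ⟨A, ?_⟩
  have hBd : ∀ x, HasDerivAt B (B x * A) x := fun x => by
    have h1 : HasDerivAt (fun y => B (y - x)) A x :=
      HasDerivAt.comp_sub_const x x (by rwa [sub_self])
    refine (h1.const_mul (B x)).congr_of_eventuallyEq (Eventually.of_forall fun y => ?_)
    simp only
    rw [← hadd, add_sub_cancel]
  have hG : ∀ x, HasDerivAt (fun t => B t * NormedSpace.exp (t • (-A))) 0 x := fun x => by
    have hcomm : Commute (-A) (NormedSpace.exp (x • (-A))) :=
      ((Commute.refl (-A)).smul_right x).exp_right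
    refine ((hBd x).mul (hasDerivAt_exp_smul_const (-A) x)).congr_deriv ?_
    rw [← hcomm.eq]
    noncomm_ring
  intro t
  have hconst := is_const_of_deriv_eq_zero (fun x => (hG x).differentiableAt)
    (fun x => (hG x).deriv) t 0
  simp only [h0, zero_smul, NormedSpace.exp_zero, mul_one] at hconst
  let _ : NormedAlgebra ℚ 𝔸 := NormedAlgebra.restrictScalars ℚ ℝ 𝔸
  have hinv : NormedSpace.exp (t • (-A)) * NormedSpace.exp (t • A) = 1 := by
    rw [← NormedSpace.exp_add_of_commute, smul_neg, neg_add_cancel, NormedSpace.exp_zero]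
    rw [smul_neg]
    exact (Commute.refl _).neg_left
  rw [← mul_one (B t), ← hinv, ← mul_assoc, hconst, one_mul]

/-- The space of complex-valued exponential polynomials of a real variable. -/
def expPolySubmodule : Submodule ℂ (ℝ → ℂ) :=
  Submodule.span ℂ (Set.range fun (p : ℕ × ℂ) (t : ℝ) => (t : ℂ) ^ p.1 * Complex.exp (p.2 * t))

theorem isExpPoly1Real_of_mem {f : ℝ → ℝ} (hf : (fun t => (f t : ℂ)) ∈ expPolySubmodule) :
    IsExpPoly1Real f := by
  obtain ⟨c, hc⟩ := Finsupp.mem_span_range_iff_exists_finsupp.mp hf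
  let e := c.support.equivFin.symm
  refine ⟨c.support.card, fun k => Polynomial.C (c (e k)) * Polynomial.X ^ (e k : ℕ × ℂ).1,
    fun k => (e k : ℕ × ℂ).2, fun t => ?_⟩
  have := congrFun hc t
  rw [Finsupp.sum, Finset.sum_apply, ← Finset.sum_coe_sort, ← e.sum_comp] at this
  rw [← this]
  simp [mul_assoc]

open scoped Matrix Matrix.Norms.Operator in
/-- On a generalized eigenvector, a matrix coefficient of `exp (t A)` is a finite sum. -/
theorem dotProduct_exp_smul_mulVec_of_pow_eq_zero {r : ℕ} (A : Matrix (Fin r) (Fin r) ℂ) (μ : ℂ)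
    (u v : Fin r → ℂ) {k : ℕ} (hv : ((A - μ • 1) ^ k) *ᵥ v = 0) (t : ℝ) :
    u ⬝ᵥ (NormedSpace.exp (t • A) *ᵥ v) =
      ∑ j ∈ Finset.range k, ((j.factorial : ℂ)⁻¹ * (u ⬝ᵥ ((A - μ • 1) ^ j *ᵥ v))) *
        ((t : ℂ) ^ j * Complex.exp (μ * t)) := by
  set N := A - μ • (1 : Matrix (Fin r) (Fin r) ℂ) with hN
  let L : Matrix (Fin r) (Fin r) ℂ →ₗ[ℂ] ℂ :=
    { toFun := fun X => u ⬝ᵥ (X *ᵥ v)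
      map_add' := fun X Y => by rw [Matrix.add_mulVec, dotProduct_add]
      map_smul' := fun a X => by rw [Matrix.smul_mulVec, dotProduct_smul, RingHom.id_apply] }
  have hLc : Continuous L := LinearMap.continuous_of_finiteDimensional L
  have hsplit : NormedSpace.exp (t • A) = Complex.exp (μ * t) • NormedSpace.exp ((t : ℂ) • N) := by
    have h1 : t • A = (μ * t) • (1 : Matrix (Fin r) (Fin r) ℂ) + (t : ℂ) • N := by
      rw [hN, smul_sub, smul_smul, mul_comm μ, add_sub_cancel]
      rfl
    rw [h1, Matrix.exp_add_of_commute _ _ ((Commute.one_left _).smul_left _)]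
    have h2 : NormedSpace.exp ((μ * t) • (1 : Matrix (Fin r) (Fin r) ℂ)) =
        Complex.exp (μ * t) • 1 := by
      rw [← Algebra.algebraMap_eq_smul_one, ← Algebra.algebraMap_eq_smul_one,
        Complex.exp_eq_exp_ℂ]
      exact (NormedSpace.algebraMap_exp_comm (μ * t)).symm
    rw [h2, smul_mul_assoc, one_mul]
  have hsum := (NormedSpace.exp_series_hasSum_exp' (𝕂 := ℂ) ((t : ℂ) • N)).map L hLc
  have hvan : ∀ j ∉ Finset.range k,
      (L ∘ fun n : ℕ => ((n.factorial : ℂ)⁻¹) • ((t : ℂ) • N) ^ n) j = 0 := fun j hj => by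
    have hj' : k ≤ j := by simpa using hj
    obtain ⟨i, rfl⟩ := Nat.exists_eq_add_of_le' hj'
    have : N ^ (i + k) *ᵥ v = 0 := by
      rw [pow_add, ← Matrix.mulVec_mulVec, hv, Matrix.mulVec_zero]
    simp only [Function.comp_apply, map_smul, smul_pow]
    simp [L, this]
  have heq := hsum.unique (hasSum_sum_of_ne_finset_zero hvan)
  rw [hsplit]
  change L (_ • _) = _
  rw [map_smul, smul_eq_mul]
  refine (congrArg (Complex.exp (μ * t) * ·) heq).trans ?_
  simp only [Finset.mul_sum]
  refine Finset.sum_congr rfl fun j _ => ?_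
  simp only [Function.comp_apply, map_smul, smul_pow, smul_eq_mul]
  change _ * (_ * (_ * (u ⬝ᵥ (N ^ j *ᵥ v)))) = _
  ring

open scoped Matrix Matrix.Norms.Operator in
theorem dotProduct_exp_smul_mulVec_mem {r : ℕ} (A : Matrix (Fin r) (Fin r) ℂ) (u v : Fin r → ℂ) :
    (fun t : ℝ => u ⬝ᵥ (NormedSpace.exp (t • A) *ᵥ v)) ∈ expPolySubmodule := by
  let T : (Fin r → ℂ) →ₗ[ℂ] (ℝ → ℂ) :=
    { toFun := fun v t => u ⬝ᵥ (NormedSpace.exp (t • A) *ᵥ v)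
      map_add' := fun v w => by
        funext t
        rw [Matrix.mulVec_add, dotProduct_add, Pi.add_apply]
      map_smul' := fun a v => by
        funext t
        rw [Matrix.mulVec_smul, dotProduct_smul, Pi.smul_apply, RingHom.id_apply] }
  suffices h : ⊤ ≤ expPolySubmodule.comap T from h (Submodule.mem_top (x := v))
  rw [← Module.End.iSup_maxGenEigenspace_eq_top (Matrix.toLin' A)]
  refine iSup_le fun μ w hw => ?_
  obtain ⟨k, hk⟩ := (Module.End.mem_maxGenEigenspace _ _ _).mp hw
  have hk' : ((A - μ • 1) ^ k) *ᵥ w = 0 := by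
    rw [← hk, ← Matrix.toLin'_apply, Matrix.toLin'_pow, map_sub, map_smul, Matrix.toLin'_one]
    rfl
  have hT : T w = ∑ j ∈ Finset.range k, ((j.factorial : ℂ)⁻¹ * (u ⬝ᵥ ((A - μ • 1) ^ j *ᵥ w))) •
      fun t : ℝ => (t : ℂ) ^ j * Complex.exp (μ * t) := by
    funext t
    simp only [Finset.sum_apply, Pi.smul_apply, smul_eq_mul]
    exact dotProduct_exp_smul_mulVec_of_pow_eq_zero A μ u w hk' t
  rw [Submodule.mem_comap, hT]
  exact Submodule.sum_mem _ fun j _ => Submodule.smul_mem _ _ (Submodule.subset_span ⟨(j, μ), rfl⟩)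

/-- A function whose matrices `(f (p i + q j))` of some fixed size are all singular
satisfies an addition formula of finite rank. -/
theorem exists_addition_formula {f : ℝ → ℝ} {n : ℕ}
    (h : ∀ p q : Fin (n + 1) → ℝ, Matrix.det (Matrix.of fun i j => f (p i + q j)) = 0) :
    ∃ (r : ℕ) (p q : Fin r → ℝ), IsUnit (Matrix.det (Matrix.of fun i j => f (p i + q j))) ∧
      ∀ x y, f (x + y) = ∑ i, ∑ j, f (x + q i) *
        (Matrix.of fun i j => f (p i + q j))⁻¹ i j * f (p j + y) := by
  classical
  let P : ℕ → Prop := fun r =>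
    ∀ p q : Fin r → ℝ, Matrix.det (Matrix.of fun i j => f (p i + q j)) = 0
  have hex : ∃ r, P r := ⟨n + 1, h⟩
  have hspec := Nat.find_spec hex
  have hmin : ∀ {m}, m < Nat.find hex → ¬ P m := Nat.find_min hex
  rcases hr : Nat.find hex with _ | r
  · rw [hr] at hspec
    have := hspec Fin.elim0 Fin.elim0
    simp at this
  rw [hr] at hspec hmin
  have hnot := hmin (Nat.lt_succ_self r)
  simp only [P] at hnot
  push Not at hnot
  obtain ⟨p, q, hpq⟩ := hnot
  refine ⟨r, p, q, isUnit_iff_ne_zero.mpr hpq, fun x y => ?_⟩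
  set M : Matrix (Fin r) (Fin r) ℝ := Matrix.of fun i j => f (p i + q j) with hM
  have hdet := hspec (fun i => Sum.elim p (fun _ : Fin 1 => x) (finSumFinEquiv.symm i))
    (fun i => Sum.elim q (fun _ : Fin 1 => y) (finSumFinEquiv.symm i))
  rw [← Matrix.det_submatrix_equiv_self finSumFinEquiv] at hdet
  let _ : Invertible M := M.invertibleOfIsUnitDet (isUnit_iff_ne_zero.mpr hpq)
  have hblocks : (Matrix.of fun i j : Fin (r + 1) =>
      f (Sum.elim p (fun _ : Fin 1 => x) (finSumFinEquiv.symm i) +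
        Sum.elim q (fun _ : Fin 1 => y) (finSumFinEquiv.symm j))).submatrix
        finSumFinEquiv finSumFinEquiv =
      Matrix.fromBlocks M (Matrix.of fun i _ => f (p i + y)) (Matrix.of fun _ j => f (x + q j))
        (Matrix.of fun _ _ => f (x + y)) := by
    ext (i | i) (j | j) <;> simp [hM]
  rw [hblocks, Matrix.det_fromBlocks₁₁] at hdet
  have h0 := (mul_eq_zero.mp hdet).resolve_left hpq
  rw [Matrix.det_unique, Matrix.sub_apply, sub_eq_zero, Matrix.invOf_eq_nonsing_inv] at h0
  simp only [Matrix.mul_apply, Matrix.of_apply, Finset.sum_mul] at h0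
  rw [h0, Finset.sum_comm]

open scoped Matrix Matrix.Norms.Operator in
theorem isExpPoly1Real_of_addition_formula {f : ℝ → ℝ} (hf : Continuous f) {r : ℕ}
    {p q : Fin r → ℝ} (hM : IsUnit (Matrix.det (Matrix.of fun i j => f (p i + q j))))
    (hadd : ∀ x y, f (x + y) = ∑ i, ∑ j, f (x + q i) *
        (Matrix.of fun i j => f (p i + q j))⁻¹ i j * f (p j + y)) :
    IsExpPoly1Real f := by
  set M : Matrix (Fin r) (Fin r) ℝ := Matrix.of fun i j => f (p i + q j) with hMdef
  let W : ℝ → Matrix (Fin r) (Fin r) ℝ := fun t => Matrix.of fun i j => f (p i + t + q j)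
  have hW0 : W 0 = M := by ext i j; simp [W, hMdef]
  have hWadd : ∀ x y, W (x + y) = W x * M⁻¹ * W y := fun x y => by
    ext i j
    have := hadd (p i + x) (y + q j)
    simp only [Matrix.mul_apply, W, Matrix.of_apply, Finset.sum_mul]
    rw [Finset.sum_comm, show p i + (x + y) + q j = p i + x + (y + q j) by ring, this]
    simp_rw [add_assoc]
  have hWc : Continuous W := continuous_matrix fun i j => by
    simp only [W, Matrix.of_apply]
    fun_prop
  let B : ℝ → Matrix (Fin r) (Fin r) ℂ := fun t => (M⁻¹ * W t).map Complex.ofRealHom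
  have hBc : Continuous B := (continuous_const.matrix_mul hWc).matrix_map Complex.continuous_ofReal
  have hB0 : B 0 = 1 := by
    simp only [B]
    rw [hW0, Matrix.nonsing_inv_mul _ hM, Matrix.map_one _ (map_zero _) (map_one _)]
  have hBadd : ∀ x y, B (x + y) = B x * B y := fun x y => by
    simp only [B]
    rw [← Matrix.map_mul, hWadd]
    simp only [Matrix.mul_assoc]
  obtain ⟨A, hA⟩ := exists_eq_exp_smul_of_map_add hBc hB0 hBadd
  refine isExpPoly1Real_of_mem ?_
  let u : Fin r → ℝ := fun i => f (q i)
  let v : Fin r → ℝ := fun j => f (p j)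
  have hfx : ∀ t, f t = u ⬝ᵥ ((M⁻¹ * W t) *ᵥ (M⁻¹ *ᵥ v)) := fun t => by
    have hcol : (fun j => f (p j + t)) = W t *ᵥ (M⁻¹ *ᵥ v) := by
      funext i
      have := hadd (p i + t) 0
      rw [add_zero] at this
      rw [this]
      simp [Matrix.mulVec, dotProduct, W, v, Finset.mul_sum, mul_assoc]
    have := hadd 0 t
    rw [zero_add] at this
    rw [← Matrix.mulVec_mulVec, ← hcol, this]
    simp [Matrix.mulVec, dotProduct, u, Finset.mul_sum, mul_assoc]
  have hfc : (fun t => (f t : ℂ)) = fun t : ℝ => (fun i => (u i : ℂ)) ⬝ᵥ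
      (NormedSpace.exp (t • A) *ᵥ fun j => (((M⁻¹ *ᵥ v) j : ℝ) : ℂ)) := by
    funext t
    have hBt : (f t : ℂ) = (fun i => (u i : ℂ)) ⬝ᵥ
        (B t *ᵥ fun j => (((M⁻¹ *ᵥ v) j : ℝ) : ℂ)) := by
      rw [hfx]
      simp [dotProduct, Matrix.mulVec, B, -Matrix.map_mul]
    rw [hBt, hA]
    rfl
  rw [hfc]
  exact dotProduct_exp_smul_mulVec_mem A _ _

open Filter Topology in
theorem tendsto_floor_mul_succ_div (x : ℝ) :
    Tendsto (fun m : ℕ => (⌊x * (m + 1)⌋ : ℝ) * (1 / ((m : ℝ) + 1))) atTop (𝓝 x) := by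
  have h1 : Tendsto (fun m : ℕ => x - 1 / ((m : ℝ) + 1)) atTop (𝓝 x) := by
    simpa using tendsto_const_nhds.sub (tendsto_one_div_add_atTop_nhds_zero_nat (𝕜 := ℝ))
  refine tendsto_of_tendsto_of_tendsto_of_le_of_le h1 tendsto_const_nhds (fun m => ?_) fun m => ?_
  · have hm : (0 : ℝ) < m + 1 := by positivity
    have := (Int.sub_one_lt_floor (x * ((m : ℝ) + 1))).le
    simp only
    rw [mul_one_div, le_div_iff₀ hm, sub_mul, one_div, inv_mul_cancel₀ hm.ne']
    exact this
  · have hm : (0 : ℝ) < m + 1 := by positivity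
    simp only
    rw [mul_one_div, div_le_iff₀ hm]
    exact Int.floor_le _

open Filter Topology in
theorem det_add_eq_zero_of_continuous {n : ℕ} {f : ℝ → ℝ} (hf : Continuous f)
    (heq : ∀ x h : ℝ,
      Matrix.det (fun i j : Fin (n + 1) => f (x + ((i : ℕ) + (j : ℕ)) * h)) = 0)
    (p q : Fin (n + 1) → ℝ) : Matrix.det (Matrix.of fun i j => f (p i + q j)) = 0 := by
  let g : (Fin (n + 1) → ℝ) × (Fin (n + 1) → ℝ) → ℝ := fun z =>
    Matrix.det (Matrix.of fun i j => f (z.1 i + z.2 j))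
  have hg : Continuous g := Continuous.matrix_det <| continuous_matrix fun i j => by
    simp only [Matrix.of_apply]
    fun_prop
  let s : ℕ → (Fin (n + 1) → ℝ) × (Fin (n + 1) → ℝ) := fun m =>
    (fun i => (⌊p i * (m + 1)⌋ : ℝ) * (1 / ((m : ℝ) + 1)),
      fun j => (⌊q j * (m + 1)⌋ : ℝ) * (1 / ((m : ℝ) + 1)))
  have hs : Tendsto s atTop (𝓝 (p, q)) :=
    (tendsto_pi_nhds.mpr fun i => tendsto_floor_mul_succ_div (p i)).prodMk_nhds
      (tendsto_pi_nhds.mpr fun j => tendsto_floor_mul_succ_div (q j))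
  have hzero : ∀ m, g (s m) = 0 := fun m => by
    have hgrid := det_add_eq_zero_of_hankel (a := fun k : ℤ => f (k * (1 / ((m : ℝ) + 1))))
      (n := n) (fun k => by
        rw [← heq (k * (1 / ((m : ℝ) + 1))) (1 / ((m : ℝ) + 1))]
        congr 1
        ext i j
        simp only [Matrix.of_apply]
        congr 1
        push_cast
        ring)
      (fun i => ⌊p i * (m + 1)⌋) (fun j => ⌊q j * (m + 1)⌋)
    rw [← hgrid]
    simp only [g, s, Int.cast_add, add_mul]
  exact tendsto_nhds_unique ((hg.tendsto (p, q)).comp hs)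
    (tendsto_const_nhds.congr fun m => (hzero m).symm)

theorem popoviciu_ionescu_one_variable
    (n : ℕ) (hn : 1 ≤ n) (f : ℝ → ℝ) (hf : Continuous f)
    (heq : ∀ x h : ℝ,
      Matrix.det (fun i j : Fin (n + 1) => f (x + ((i : ℕ) + (j : ℕ)) * h)) = 0) :
    IsExpPoly1Real f := by
  obtain ⟨r, p, q, hM, hadd⟩ := exists_addition_formula (det_add_eq_zero_of_continuous hf heq)
  exact isExpPoly1Real_of_addition_formula hf hM hadd
end
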